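/- arXiv:math/0606188 — 2 statements merged into one kernel-verified Lean document; each statement's English description precedes it below -/
import Mathlib

section
/- The Continuum Hypothesis holds if and only if the set of all real numbers that are transcendental over ℚ can be written as the union of countably many transcendence bases of ℝ over ℚ. -/
theorem ch_aux_isBase {α ι : Type*} [LinearOrder ι] [WellFoundedLT ι] (M : Matroid α) [M.Finitary]
    (hE : M.E = Set.univ) (t x : ι → α) (ht : M.closure (Set.range t) = Set.univ)
    (hx : ∀ i, x i ∈ M.closure (t '' Set.Iic i))
    (hx' : ∀ i, x i ∉ M.closure (t '' Set.Iio i)) : M.IsBase (Set.range x) := by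
  classical
  have hsub : ∀ s : Set α, s ⊆ M.E := fun s => hE ▸ Set.subset_univ s
  have hind : M.Indep (Set.range x) := by
    have key : ∀ s : Finset ι, M.Indep (x '' (s : Set ι)) := by
      intro s
      refine Finset.induction_on_max_value (fun i : ι => i)
        (motive := fun s : Finset ι => M.Indep (x '' (s : Set ι))) s ?_ ?_
      · simp
      · intro a s ha hs ih
        rw [Finset.coe_insert, Set.image_insert_eq, Matroid.insert_indep_iff]
        refine ⟨ih, fun _ => ⟨hE ▸ Set.mem_univ _, fun hcl => hx' a ?_⟩⟩
        refine M.closure_subset_closure_of_subset_closure ?_ hcl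
        rintro _ ⟨c, hc, rfl⟩
        have hca : c < a := lt_of_le_of_ne (hs c hc) (fun h => ha (h ▸ hc))
        refine M.closure_subset_closure (Set.image_mono ?_) (hx c)
        exact fun d hd => lt_of_le_of_lt hd hca
    refine Matroid.indep_of_forall_finite_subset_indep _ fun J hJ hfin => ?_
    obtain ⟨s, rfl⟩ := hfin.exists_finset_coe
    rw [← Set.image_univ, Finset.subset_set_image_iff] at hJ
    obtain ⟨U, -, rfl⟩ := hJ
    rw [Finset.coe_image]
    exact key U
  have hsp : ∀ i, t i ∈ M.closure (Set.range x) := by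
    intro i
    induction i using WellFoundedLT.induction with
    | _ i ih =>
      have h1 : t '' Set.Iic i = insert (t i) (t '' Set.Iio i) := by
        rw [← Set.image_insert_eq, Set.Iio_insert]
      have h2 : x i ∈ M.closure (insert (t i) (t '' Set.Iio i)) := h1 ▸ hx i
      have h3 := (M.closure_exchange ⟨h2, hx' i⟩).1
      refine M.closure_subset_closure_of_subset_closure ?_ h3
      rintro _ (rfl | ⟨c, hc, rfl⟩)
      · exact M.mem_closure_of_mem ⟨i, rfl⟩ (hsub _)
      · exact ih c hc
  refine hind.isBase_of_ground_subset_closure ?_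
  rw [hE, ← ht]
  refine M.closure_subset_closure_of_subset_closure ?_
  rintro _ ⟨i, rfl⟩
  exact hsp i

theorem ch_aux_level {α ι : Type*} [LinearOrder ι] [WellFoundedLT ι] (M : Matroid α) [M.Finitary]
    (t : ι → α) (e : α) (ht : e ∈ M.closure (Set.range t)) (he : e ∉ M.closure ∅) :
    ∃ i, e ∈ M.closure (t '' Set.Iic i) ∧ e ∉ M.closure (t '' Set.Iio i) := by
  classical
  have key : ∀ S : Set ι, e ∈ M.closure (t '' S) → ∃ i ∈ S, e ∈ M.closure (t '' Set.Iic i) := by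
    intro S hS
    obtain ⟨I, hIS, hfin, -, hI⟩ := M.exists_mem_finite_closure_of_mem_closure hS
    obtain ⟨s, rfl⟩ := hfin.exists_finset_coe
    rw [Finset.subset_set_image_iff] at hIS
    obtain ⟨U, hUS, rfl⟩ := hIS
    rw [Finset.coe_image] at hI
    rcases U.eq_empty_or_nonempty with rfl | hne
    · simp at hI; exact absurd hI he
    · refine ⟨U.max' hne, hUS (U.max'_mem hne), M.closure_subset_closure (Set.image_mono ?_) hI⟩
      exact fun c hc => U.le_max' c hc
  have hex : {i | e ∈ M.closure (t '' Set.Iic i)}.Nonempty := by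
    obtain ⟨i, -, hi⟩ := key Set.univ (by rwa [Set.image_univ])
    exact ⟨i, hi⟩
  refine ⟨wellFounded_lt.min _ hex, wellFounded_lt.min_mem _ hex, fun h => ?_⟩
  obtain ⟨i, hi, hi'⟩ := key _ h
  exact wellFounded_lt.not_lt_min {i | e ∈ M.closure (t '' Set.Iic i)} hi' hi

theorem ch_aux_countable (s : Set ℝ) (hs : s.Countable) :
    ((AlgebraicIndependent.matroid ℚ ℝ).closure s).Countable := by
  rw [AlgebraicIndependent.matroid_closure_eq]
  have : Countable (Algebra.adjoin ℚ s) := by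
    have h := Algebra.lift_cardinalMk_adjoin_le ℚ s
    have := hs.to_subtype
    rw [← Cardinal.mk_le_aleph0_iff]
    simpa using h
  exact (Algebraic.countable (Algebra.adjoin ℚ s) ℝ)

theorem ch_aux_forward (h : Cardinal.continuum.{0} = Cardinal.aleph 1) :
      ∃ B : ℕ → Set ℝ,
        (∀ n, IsTranscendenceBasis ℚ (fun x : B n => (x : ℝ))) ∧
        {x : ℝ | Transcendental ℚ x} = ⋃ n, B n := by
  obtain ⟨B, hB⟩ := (AlgebraicIndependent.matroid ℚ ℝ).exists_isBase
  let W := (Cardinal.aleph.{0} 1).ord.ToType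
  have hW : Cardinal.mk B ≤ Cardinal.mk W := by
    have : Cardinal.mk W = Cardinal.aleph 1 := by simp [W]
    rw [this, ← h, ← Cardinal.mk_real]
    exact Cardinal.mk_set_le B
  obtain ⟨e⟩ := hW
  let ι := Set.range e
  let eq : B ≃ ι := Equiv.ofInjective e e.injective
  let t : ι → ℝ := fun i => (eq.symm i : ℝ)
  have htr : Set.range t = B := by
    have : t = Subtype.val ∘ eq.symm := rfl
    rw [this, eq.symm.surjective.range_comp, Subtype.range_coe]
  have htinj : Function.Injective t := Subtype.val_injective.comp eq.symm.injective
  have hcl : (AlgebraicIndependent.matroid ℚ ℝ).closure (Set.range t) = Set.univ := by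
    rw [htr, hB.closure_eq]; rfl
  have hIio : ∀ i : ι, (Set.Iio i).Countable := by
    intro i
    have : (Set.Iio (i : W)).Countable := by
      rw [Cardinal.countable_iff_lt_aleph_one]
      simpa [W] using Cardinal.mk_Iio_lt (i : W) (by simp [W])
    exact (this.preimage Subtype.val_injective)
  have hIic : ∀ i : ι, (Set.Iic i).Countable := by
    intro i
    rw [← Set.Iio_insert]
    exact (hIio i).insert _
  set M := AlgebraicIndependent.matroid ℚ ℝ with hM
  let L : ι → Set ℝ := fun i => M.closure (t '' Set.Iic i) \ M.closure (t '' Set.Iio i)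
  have hLc : ∀ i, (L i).Countable := fun i =>
    (ch_aux_countable _ ((hIic i).image t)).mono Set.sdiff_subset
  have hLn : ∀ i, (L i).Nonempty := by
    intro i
    refine ⟨t i, M.mem_closure_of_mem ⟨i, Set.mem_Iic.2 le_rfl, rfl⟩ (Set.subset_univ _), fun hc => ?_⟩
    refine hB.indep.notMem_closure_sdiff_of_mem (e := t i) (htr ▸ ⟨i, rfl⟩)
      (M.closure_subset_closure ?_ hc)
    rintro _ ⟨c, hc, rfl⟩
    exact ⟨htr ▸ ⟨c, rfl⟩, fun h => (ne_of_lt hc) (htinj h)⟩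
  choose f hf using fun i => (hLc i).exists_eq_range (hLn i)
  have hfm : ∀ i n, f i n ∈ L i := fun i n => (hf i).symm ▸ ⟨n, rfl⟩
  have hloop : ∀ x : ℝ, x ∉ M.closure ∅ ↔ Transcendental ℚ x := by
    intro x
    have h1 := M.empty_indep.insert_indep_iff_of_notMem (Set.notMem_empty x)
    have h2 : x ∈ M.E \ M.closure ∅ ↔ x ∉ M.closure ∅ :=
      ⟨fun h => h.2, fun h => ⟨Set.mem_univ x, h⟩⟩
    rw [← h2, ← h1, AlgebraicIndependent.matroid_indep_iff, insert_empty_eq]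
    exact algebraicIndependent_unique_type_iff
  have hbase : ∀ n, M.IsBase (Set.range fun i => f i n) := fun n =>
    ch_aux_isBase M rfl t _ hcl (fun i => (hfm i n).1) (fun i => (hfm i n).2)
  refine ⟨fun n => Set.range fun i => f i n, fun n => hbase n, ?_⟩
  ext x
  simp only [Set.mem_ofPred_eq, Set.mem_iUnion, Set.mem_range]
  rw [← hloop]
  constructor
  · intro hx
    obtain ⟨i, hi⟩ := ch_aux_level M t x (hcl ▸ Set.mem_univ x) hx
    have : x ∈ L i := hi
    rw [hf i] at this
    obtain ⟨n, hn⟩ := this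
    exact ⟨n, i, hn⟩
  · rintro ⟨n, i, rfl⟩ hx
    exact (hfm i n).2 (M.closure_subset_closure (Set.empty_subset _) hx)

theorem ch_aux_linear (S : Set ℝ) (hS : LinearIndependent ℚ (fun x : S => (x : ℝ)))
    (a b c d : ℝ) (ha : a ∈ S) (hb : b ∈ S) (hc : c ∈ S) (hd : d ∈ S) (h : a - b = c - d)
    (hab : a ≠ b) : a = c := by
  by_contra hac
  by_cases had : a = d
  · subst had
    refine hS.notMem_span_image (s := {⟨b, hb⟩, ⟨c, hc⟩}) (x := ⟨a, ha⟩) (by simp [hab, hac]) ?_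
    rw [Set.image_pair, Submodule.mem_span_pair]
    refine ⟨1/2, 1/2, ?_⟩
    simp only [Rat.smul_def]; push_cast; linarith
  · refine hS.notMem_span_image (s := {⟨b, hb⟩, ⟨c, hc⟩, ⟨d, hd⟩}) (x := ⟨a, ha⟩)
      (by simp [hab, hac, had]) ?_
    simp only [Set.image_insert_eq, Set.image_singleton]
    rw [Submodule.mem_span_triple]
    refine ⟨1, 1, -1, ?_⟩
    simp only [Rat.smul_def]; push_cast; linarith

theorem ch_aux_backward (B : ℕ → Set ℝ)
    (hB : ∀ n, IsTranscendenceBasis ℚ (fun x : B n => (x : ℝ)))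
    (hU : {x : ℝ | Transcendental ℚ x} = ⋃ n, B n) :
    Cardinal.continuum.{0} = Cardinal.aleph 1 := by
  classical
  refine le_antisymm ?_ Cardinal.aleph_one_le_continuum
  by_contra! hlt
  have hex : ∀ x : ℝ, Transcendental ℚ x → ∃ n, x ∈ B n := by
    intro x hx
    have : x ∈ ⋃ n, B n := hU ▸ hx
    simpa using this
  let C := ℕ ⊕ {x : ℝ | IsAlgebraic ℚ x}
  have : Countable {x : ℝ | IsAlgebraic ℚ x} := (Algebraic.countable ℚ ℝ).to_subtype
  have hC : Countable C := inferInstance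
  obtain ⟨κ, hκ⟩ : ∃ κ : ℝ → C, ∀ a b c d, κ a = κ b → κ c = κ a → κ d = κ a →
      a - b = c - d → a ≠ b → a = c := by
    refine ⟨fun x => if hx : IsAlgebraic ℚ x then Sum.inr ⟨x, hx⟩ else
      Sum.inl (hex x hx).choose, ?_⟩
    intro a b c d hb hc hd h hab
    by_cases h1 : IsAlgebraic ℚ a <;> by_cases h2 : IsAlgebraic ℚ b <;>
      by_cases h3 : IsAlgebraic ℚ c <;> by_cases h4 : IsAlgebraic ℚ d <;>
      simp only [h1, h2, h3, h4, dif_pos, dif_neg, not_false_eq_true, reduceCtorEq] at hb hc hd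
    · exact congrArg Subtype.val (Sum.inr.inj hc).symm
    · have ha' := (hex a h1).choose_spec
      have hb' := (hex b h2).choose_spec
      have hc' := (hex c h3).choose_spec
      have hd' := (hex d h4).choose_spec
      rw [← Sum.inl.inj hb] at hb'
      rw [Sum.inl.inj hc] at hc'
      rw [Sum.inl.inj hd] at hd'
      exact ch_aux_linear _ (hB _).1.linearIndependent a b c d ha' hb' hc' hd' h hab
  obtain ⟨X, hX⟩ := Cardinal.le_mk_iff_exists_set.1 (Cardinal.mk_real ▸ hlt.le)
  have hp : ∀ y : ℝ, ∃ x₁ x₂ : X, κ (x₁ + y) = κ (x₂ + y) ∧ x₁ ≠ x₂ := by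
    intro y
    have : ¬ Function.Injective (fun x : X => κ (x + y)) := by
      intro hinj
      have h1 : Countable X := hinj.countable
      rw [← Cardinal.mk_le_aleph0_iff, hX] at h1
      exact absurd Cardinal.aleph0_lt_aleph_one (not_lt.2 h1)
    simp only [Function.Injective, not_forall] at this
    obtain ⟨a, b, hab, hn⟩ := this
    exact ⟨a, b, hab, hn⟩
  choose p q hpq hne using hp
  have hni : ¬ Function.Injective (fun y : ℝ => (p y, q y, κ (p y + y))) := by
    intro hinj
    have h1 := Cardinal.mk_le_of_injective hinj
    have h2 : Cardinal.mk C ≤ Cardinal.aleph 1 :=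
      (Cardinal.mk_le_aleph0_iff.2 hC).trans Cardinal.aleph0_lt_aleph_one.le
    have h3 : Cardinal.mk (X × X × C) ≤ Cardinal.aleph 1 := by
      rw [Cardinal.mk_prod, Cardinal.mk_prod]
      simp only [Cardinal.lift_id, hX]
      calc _ ≤ Cardinal.aleph 1 * (Cardinal.aleph 1 * Cardinal.aleph 1) := by gcongr
        _ = _ := by simp
    rw [Cardinal.mk_real] at h1
    exact absurd hlt (not_lt.2 (h1.trans h3))
  simp only [Function.Injective, not_forall] at hni
  obtain ⟨y, z, hyz, hne'⟩ := hni
  simp only [Prod.mk.injEq] at hyz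
  obtain ⟨e1, e2, e3⟩ := hyz
  have h1 := hpq y
  have h2 := hpq z
  have := hκ (p y + y) (q y + y) (p z + z) (q z + z) h1 e3.symm (by rw [← h2, e3])
    (by rw [e1, e2]; ring) (fun h => hne y (Subtype.ext (by linarith)))
  rw [e1] at this
  exact hne' (by linarith)

/-- The Continuum Hypothesis holds if and only if the set of all real numbers that are
transcendental over `ℚ` can be written as the union of countably many transcendence bases
of `ℝ` over `ℚ`. -/
theorem ch_iff_transcendentals_union_of_transcendence_bases :
    Cardinal.continuum = Cardinal.aleph 1 ↔
      ∃ B : ℕ → Set ℝ,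
        (∀ n, IsTranscendenceBasis ℚ (fun x : B n => (x : ℝ))) ∧
        {x : ℝ | Transcendental ℚ x} = ⋃ n, B n := by
  constructor
  · intro h
    apply ch_aux_forward
    rw [← Cardinal.lift_inj]
    simpa using h
  · rintro ⟨B, hB, hU⟩
    have h := congrArg Cardinal.lift (ch_aux_backward B hB hU)
    simpa using h
end

section
/- Assume the Continuum Hypothesis. Let H be an infinite-dimensional separable complex Hilbert space and let B(H) be the algebra of bounded linear operators on H. Then there exists a pure state φ on B(H) such that for every maximal abelian self-adjoint subalgebra A of B(H), the restriction of φ to A is not a pure state of A. -/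
/-- A state on a unital complex star algebra: a positive linear functional sending `1` to `1`.
Positivity means that `φ (star a * a)` is a nonnegative real number for every `a`. -/
def IsState {M : Type*} [Ring M] [StarRing M] [Algebra ℂ M] (φ : M →ₗ[ℂ] ℂ) : Prop :=
  (∀ a : M, 0 ≤ (φ (star a * a)).re ∧ (φ (star a * a)).im = 0) ∧ φ 1 = 1

/-- A pure state: a state which is an extreme point of the set of states, i.e. it cannot be
written as a nontrivial convex combination of two distinct states. -/
def IsPureState {M : Type*} [Ring M] [StarRing M] [Algebra ℂ M] (φ : M →ₗ[ℂ] ℂ) : Prop :=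
  IsState φ ∧ ∀ (ψ₁ ψ₂ : M →ₗ[ℂ] ℂ) (t : ℝ), IsState ψ₁ → IsState ψ₂ →
    0 < t → t < 1 → φ = (t : ℂ) • ψ₁ + ((1 - t : ℝ) : ℂ) • ψ₂ → ψ₁ = ψ₂

lemma aw_linear_bdd (r C : ℝ) (h : ∀ s : ℝ, 0 ≤ C + s * r) : r = 0 := by
  by_contra hr
  have := h (-(C + 1) / r)
  rw [div_mul_cancel₀ _ hr] at this
  linarith

lemma aw_state_cs {M : Type*} [Ring M] [StarRing M] [Algebra ℂ M] [StarModule ℂ M]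
    {φ : M →ₗ[ℂ] ℂ} (hφ : IsState φ) {q : M} (hq : φ (star q * q) = 0) (x : M) :
    φ (star x * q) = 0 ∧ φ (star q * x) = 0 := by
  have key : ∀ z : ℂ, φ (star (x + z • q) * (x + z • q)) =
      φ (star x * x) + (z * φ (star x * q) + (starRingEnd ℂ z) * φ (star q * x)) := by
    intro z
    simp only [star_add, star_smul, add_mul, mul_add, smul_mul_assoc, mul_smul_comm, map_add,
      map_smul, smul_eq_mul, hq, mul_zero, add_zero, RCLike.star_def]
    ring
  set A := φ (star x * q)
  set B := φ (star q * x)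
  have hx := (hφ.1 x).2
  have him : ∀ z : ℂ, (z * A + (starRingEnd ℂ z) * B).im = 0 := by
    intro z
    have := (hφ.1 (x + z • q)).2
    rw [key, Complex.add_im, hx, zero_add] at this
    exact this
  have hre : ∀ z : ℂ, (z * A + (starRingEnd ℂ z) * B).re = 0 := by
    intro z
    apply aw_linear_bdd _ (φ (star x * x)).re
    intro s
    have := (hφ.1 (x + ((s : ℂ) * z) • q)).1
    rw [key, Complex.add_re] at this
    convert this using 2
    simp
    ring
  have h1 : A + B = 0 := by
    apply Complex.ext
    · simpa using hre 1
    · simpa using him 1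
  have h2 : Complex.I * A - Complex.I * B = 0 := by
    apply Complex.ext
    · simpa using hre Complex.I
    · simpa [sub_eq_add_neg] using him Complex.I
  have h3 : A - B = 0 := by
    have : Complex.I * (A - B) = 0 := by rw [mul_sub]; exact h2
    simpa using this
  constructor
  · linear_combination (h1 + h3) / 2
  · linear_combination (h1 - h3) / 2

lemma aw_pure_mult {M : Type*} [Ring M] [StarRing M] [Algebra ℂ M] [StarModule ℂ M]
    {φ : M →ₗ[ℂ] ℂ} (hφ : IsPureState φ) (comm : ∀ a b : M, a * b = b * a)
    {c x y : M} (hc : c = star x * x) (hc' : 1 - c = star y * y) (a : M) :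
    φ (c * a) = φ c * φ a := by
  obtain ⟨hs, hp⟩ := hφ
  have pos : ∀ x b : M, 0 ≤ (φ (star x * x * (star b * b))).re ∧
      (φ (star x * x * (star b * b))).im = 0 := by
    intro x b
    have : star x * x * (star b * b) = star (x * b) * (x * b) := by
      rw [star_mul, ← mul_assoc, comm (star x * x) (star b)]
      simp only [mul_assoc]
    rw [this]; exact hs.1 _
  have h1c : φ (1 - c) = 1 - φ c := by rw [map_sub, hs.2]
  obtain ⟨t, ht⟩ : ∃ t : ℝ, φ c = (t : ℂ) :=
    ⟨(φ c).re, by apply Complex.ext <;> simp [hc, (hs.1 x).2]⟩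
  have ht0 : 0 ≤ t := by
    have := (hs.1 x).1
    rwa [← hc, ht, Complex.ofReal_re] at this
  have ht1 : t ≤ 1 := by
    have := (hs.1 y).1
    rw [← hc', h1c, ht] at this
    simpa using this
  rcases ht0.eq_or_lt with h0 | h0
  · have : φ (star x * x) = 0 := by rw [← hc, ht, ← h0]; simp
    have := (aw_state_cs hs this (x * a)).2
    rw [ht, ← h0, hc, mul_assoc, this]; simp
  rcases ht1.eq_or_lt with h1 | h1
  · have : φ (star y * y) = 0 := by rw [← hc', h1c, ht, h1]; simp
    have := (aw_state_cs hs this (y * a)).2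
    rw [← mul_assoc, ← hc', sub_mul, one_mul, map_sub, sub_eq_zero] at this
    rw [ht, h1, ← this]; simp
  have ht' : (t : ℂ) ≠ 0 := by exact_mod_cast h0.ne'
  have ht1' : ((1 - t : ℝ) : ℂ) ≠ 0 := by exact_mod_cast (sub_pos.2 h1).ne'
  have st : ∀ (r : ℝ) (d w : M), 0 < r → d = star w * w → φ d = r →
      IsState (((r⁻¹ : ℝ) : ℂ) • φ.comp (LinearMap.mulLeft ℂ d)) := by
    intro r d w hr hd hdr
    refine ⟨fun b => ?_, ?_⟩
    · have := pos w b
      rw [← hd] at this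
      simp only [LinearMap.smul_apply, LinearMap.comp_apply, LinearMap.mulLeft_apply, smul_eq_mul,
        Complex.re_ofReal_mul, Complex.im_ofReal_mul, this.2, mul_zero, and_true]
      exact mul_nonneg (inv_nonneg.2 hr.le) this.1
    · have : (r : ℂ) ≠ 0 := by exact_mod_cast hr.ne'
      simp [hdr, this]
  have e := hp _ _ t (st t c x h0 hc ht) (st (1 - t) (1 - c) y (sub_pos.2 h1) hc'
    (by rw [h1c, ht]; push_cast; rfl)) h0 h1 (by
      ext b
      simp only [LinearMap.add_apply, LinearMap.smul_apply, LinearMap.comp_apply,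
        LinearMap.mulLeft_apply, smul_eq_mul, Complex.ofReal_inv]
      rw [mul_inv_cancel_left₀ ht', mul_inv_cancel_left₀ ht1', ← map_add, ← add_mul]
      simp)
  have e2 := congrArg (fun f => f a) e
  simp only [LinearMap.smul_apply, LinearMap.comp_apply,
        LinearMap.mulLeft_apply, smul_eq_mul, Complex.ofReal_inv, sub_mul, one_mul, map_sub] at e2
  rw [inv_mul_eq_div, inv_mul_eq_div, div_eq_div_iff ht' ht1'] at e2
  rw [ht]
  push_cast at e2
  linear_combination e2

/-- Under a cardinality bound, a poset in which countable chains below can be refined into dense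
sets carries a decreasing family meeting all of them. -/
lemma aw_generic {P ι : Type*} (le : P → P → Prop) (D : ι → P → Prop)
    (rfl' : ∀ x, le x x) (hι : Cardinal.mk ι ≤ Cardinal.aleph 1)
    (ext : ∀ (i : ι) (C : Set P), C.Countable → (∀ x ∈ C, ∀ y ∈ C, le x y ∨ le y x) →
      ∃ x, D i x ∧ ∀ y ∈ C, le x y) :
    ∃ p : ι → P, (∀ i, D i (p i)) ∧ ∀ i j, le (p i) (p j) ∨ le (p j) (p i) := by
  classical
  obtain ⟨r, wo, hr⟩ := Cardinal.exists_ord_eq ι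
  by_cases hne : Nonempty P
  swap
  · refine ⟨fun i => ((hne ⟨(ext i ∅ (by simp) (by simp)).choose⟩).elim), fun i => ?_, fun i => ?_⟩
    all_goals exact ((hne ⟨(ext i ∅ (by simp) (by simp)).choose⟩).elim)
  have wf : WellFounded r := wo.wf
  let F : ∀ i, (∀ j, r j i → P) → P := fun i f =>
    if h : ∃ x, D i x ∧ ∀ j (hj : r j i), le x (f j hj) then h.choose else Classical.arbitrary P
  let p : ι → P := wf.fix F
  have hp : ∀ i, p i = F i (fun j _ => p j) := fun i => wf.fix_eq F i
  have main : ∀ i, D i (p i) ∧ ∀ j, r j i → le (p i) (p j) := by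
    intro i
    induction i using wf.induction with
    | _ i ih =>
    have hcount : {j | r j i}.Countable := by
      have h1 := Cardinal.card_typein_lt (r := r) i hr
      rw [← Cardinal.le_aleph0_iff_set_countable]
      have h2 : Cardinal.mk {j | r j i} < Cardinal.aleph 1 := by
        refine lt_of_lt_of_le ?_ hι
        rw [Ordinal.card_typein] at h1
        exact h1
      rw [← Cardinal.succ_aleph0] at h2
      exact Order.lt_succ_iff.1 h2
    obtain ⟨x, hx, hx'⟩ := ext i (p '' {j | r j i}) (hcount.image p) (by
      rintro _ ⟨a, ha, rfl⟩ _ ⟨b, hb, rfl⟩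
      rcases trichotomous_of r a b with h | h | h
      · exact Or.inr ((ih b hb).2 a h)
      · subst h
        exact Or.inl (rfl' _)
      · exact Or.inl ((ih a ha).2 b h))
    have h : ∃ x, D i x ∧ ∀ j (hj : r j i), le x (p j) :=
      ⟨x, hx, fun j hj => hx' _ ⟨j, hj, rfl⟩⟩
    have e : p i = h.choose := by
      rw [hp]; exact dif_pos h
    rw [e]
    exact h.choose_spec
  refine ⟨p, fun i => (main i).1, fun i j => ?_⟩
  rcases trichotomous_of r i j with h | h | h
  · exact Or.inr ((main j).2 i h)
  · exact Or.inl (h ▸ rfl' _)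
  · exact Or.inl ((main i).2 j h)


section geom
set_option linter.unusedSectionVars false
variable {H : Type} [NormedAddCommGroup H] [InnerProductSpace ℂ H] [CompleteSpace H]

/-- Almost containment modulo finite-dimensional subspaces. -/
def awLe (W V : Submodule ℂ H) : Prop :=
  ∃ F : Submodule ℂ H, FiniteDimensional ℂ F ∧ W ⊓ Fᗮ ≤ V

/-- Closed span of a sequence. -/
def awSpan (v : ℕ → H) : Submodule ℂ H := (Submodule.span ℂ (Set.range v)).topologicalClosure

/-- Closed infinite-dimensional subspaces. -/
def awBig (V : Submodule ℂ H) : Prop := IsClosed (V : Set H) ∧ ¬ FiniteDimensional ℂ V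

lemma awLe_refl (V : Submodule ℂ H) : awLe V V := ⟨⊥, inferInstance, inf_le_left⟩

lemma awLe_of_le {V W : Submodule ℂ H} (h : W ≤ V) : awLe W V :=
  ⟨⊥, inferInstance, inf_le_left.trans h⟩

lemma awLe_trans {U V W : Submodule ℂ H} (h₁ : awLe W V) (h₂ : awLe V U) : awLe W U := by
  obtain ⟨F, hF, h⟩ := h₁
  obtain ⟨G, hG, h'⟩ := h₂
  refine ⟨F ⊔ G, inferInstance, ?_⟩
  rw [← Submodule.inf_orthogonal]
  rw [← inf_assoc]
  exact (inf_le_inf_right _ h).trans h'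

lemma aw_exists_unit {V F : Submodule ℂ H} (hV : ¬ FiniteDimensional ℂ V)
    [FiniteDimensional ℂ F] : ∃ v ∈ V, v ∈ Fᗮ ∧ ‖v‖ = 1 := by
  have : ∃ v ∈ V, v ∈ Fᗮ ∧ v ≠ 0 := by
    by_contra hcon
    push Not at hcon
    apply hV
    apply FiniteDimensional.of_injective
      ((F.orthogonalProjectionOnto : H →ₗ[ℂ] F).comp V.subtype)
    rw [injective_iff_map_eq_zero]
    intro x hx
    have := hcon x x.2 ?_
    · exact_mod_cast this
    · rwa [LinearMap.comp_apply, Submodule.subtype_apply, ContinuousLinearMap.coe_coe,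
        Submodule.orthogonalProjectionOnto_eq_zero_iff] at hx
  obtain ⟨v, hv, hv', h0⟩ := this
  refine ⟨((‖v‖⁻¹ : ℝ) : ℂ) • v, V.smul_mem _ hv, Fᗮ.smul_mem _ hv', ?_⟩
  rw [norm_smul]
  simp [h0]

lemma aw_mem_span (v : ℕ → H) (n : ℕ) : v n ∈ awSpan v :=
  Submodule.le_topologicalClosure _ (Submodule.subset_span ⟨n, rfl⟩)

lemma awSpan_le {v : ℕ → H} {V : Submodule ℂ H} (hV : IsClosed (V : Set H)) (h : ∀ n, v n ∈ V) :
    awSpan v ≤ V := by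
  apply Submodule.topologicalClosure_minimal _ _ hV
  rw [Submodule.span_le]
  rintro _ ⟨n, rfl⟩
  exact h n

lemma awSpan_big {v : ℕ → H} (hv : Orthonormal ℂ v) : awBig (awSpan v) := by
  refine ⟨Submodule.isClosed_topologicalClosure _, fun hfd => ?_⟩
  have hli : LinearIndependent ℂ (fun n => (⟨v n, aw_mem_span v n⟩ : awSpan v)) :=
    LinearIndependent.of_comp (awSpan v).subtype hv.linearIndependent
  have := hli.finite
  exact not_finite ℕ

lemma awSpan_awLe {v : ℕ → H} (hv : Orthonormal ℂ v) {V : Submodule ℂ H}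
    (hV : IsClosed (V : Set H)) (n : ℕ) (h : ∀ k, n ≤ k → v k ∈ V) : awLe (awSpan v) V := by
  have hfin : (v '' Set.Iio n).Finite := (Set.finite_Iio n).image v
  have : FiniteDimensional ℂ (Submodule.span ℂ (v '' Set.Iio n)) :=
    FiniteDimensional.span_of_finite ℂ hfin
  set F := Submodule.span ℂ (v '' Set.Iio n) with hF
  refine ⟨F, this, ?_⟩
  have key : awSpan v ≤ V.comap (Fᗮ.starProjection : H →ₗ[ℂ] H) := by
    apply awSpan_le
    · exact hV.preimage Fᗮ.starProjection.continuous
    · intro k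
      rw [Submodule.mem_comap]
      rcases lt_or_ge k n with hk | hk
      · have : Fᗮ.starProjection (v k) = 0 := by
          rw [Submodule.starProjection_apply_eq_zero_iff]
          exact Submodule.le_orthogonal_orthogonal _ (Submodule.subset_span ⟨k, hk, rfl⟩)
        simp [this]
      · have : Fᗮ.starProjection (v k) = v k := by
          rw [Submodule.starProjection_eq_self_iff, hF, Submodule.mem_orthogonal]
          intro u hu
          induction hu using Submodule.span_induction with
          | mem x hx =>
            obtain ⟨j, hj, rfl⟩ := hx
            exact hv.2 (ne_of_lt (lt_of_lt_of_le hj hk))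
          | zero => simp
          | add x y _ _ hx hy => rw [inner_add_left, hx, hy, add_zero]
          | smul c x _ hx => rw [inner_smul_left, hx, mul_zero]
        simpa [this] using h k hk
  rintro x ⟨hx, hx'⟩
  have h1 := key hx
  rw [Submodule.mem_comap] at h1
  have : Fᗮ.starProjection x = x := Submodule.starProjection_eq_self_iff.2 hx'
  simpa [this] using h1

lemma aw_mem_perp_span {s : Set H} {y : H} (h : y ∈ (Submodule.span ℂ s)ᗮ) {x : H} (hx : x ∈ s) :
    inner ℂ x y = 0 := (Submodule.mem_orthogonal _ _).1 h x (Submodule.subset_span hx)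

lemma aw_orthonormal {v : ℕ → H} (h1 : ∀ n, ‖v n‖ = 1)
    (h2 : ∀ m n, m < n → inner ℂ (v m) (v n) = 0) : Orthonormal ℂ v := by
  refine ⟨h1, fun i j hij => ?_⟩
  rcases lt_or_gt_of_ne hij with h | h
  · exact h2 _ _ h
  · rw [← inner_conj_symm, h2 _ _ h, map_zero]

lemma aw_chain_seq (V : ℕ → Submodule ℂ H) (hV : ∀ n, awBig (V n))
    (hc : ∀ m n, awLe (V m) (V n) ∨ awLe (V n) (V m)) :
    ∃ W, awBig W ∧ ∀ n, awLe W (V n) := by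
  classical
  have hmin : ∀ n, ∃ m, ∃ F : Submodule ℂ H, FiniteDimensional ℂ F ∧ ∀ j ≤ n, V m ⊓ Fᗮ ≤ V j := by
    intro n
    induction n with
    | zero => exact ⟨0, ⊥, inferInstance, fun j hj => by
        obtain rfl : j = 0 := by omega
        exact inf_le_left⟩
    | succ n ih =>
      obtain ⟨m, F, hF, h⟩ := ih
      rcases hc m (n + 1) with ⟨G, hG, h'⟩ | ⟨G, hG, h'⟩
      · refine ⟨m, F ⊔ G, inferInstance, fun j hj => ?_⟩
        rw [← Submodule.inf_orthogonal]
        rcases Nat.le_succ_iff.1 hj with hj | rfl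
        · exact le_trans (inf_le_inf_left _ inf_le_left) (h j hj)
        · exact le_trans (inf_le_inf_left _ inf_le_right) h'
      · refine ⟨n + 1, F ⊔ G, inferInstance, fun j hj => ?_⟩
        rw [← Submodule.inf_orthogonal]
        rcases Nat.le_succ_iff.1 hj with hj | rfl
        · refine le_trans ?_ (h j hj)
          refine le_inf (le_trans (inf_le_inf_left _ inf_le_right) h') ?_
          exact inf_le_right.trans inf_le_left
        · exact inf_le_left
  obtain ⟨f, hf, hr⟩ := exists_seq_of_forall_finset_exists
    (fun x : ℕ × H => ‖x.2‖ = 1 ∧ ∀ j ≤ x.1, x.2 ∈ V j)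
    (fun x y => x.1 < y.1 ∧ inner ℂ x.2 y.2 = 0) (by
      intro s _
      obtain ⟨m, F, hF, h⟩ := hmin (s.sup Prod.fst + 1)
      have : FiniteDimensional ℂ (Submodule.span ℂ ((s.image Prod.snd : Finset H) : Set H)) :=
        FiniteDimensional.span_of_finite ℂ (Finset.finite_toSet _)
      obtain ⟨v, hv, hv', h1⟩ := aw_exists_unit (F := F ⊔
        Submodule.span ℂ ((s.image Prod.snd : Finset H) : Set H)) (hV m).2
      rw [← Submodule.inf_orthogonal] at hv'
      refine ⟨(s.sup Prod.fst + 1, v), ⟨h1, fun j hj => h j hj ⟨hv, hv'.1⟩⟩, fun x hx => ⟨?_, ?_⟩⟩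
      · exact Nat.lt_succ_of_le (Finset.le_sup (f := Prod.fst) hx)
      · exact aw_mem_perp_span hv'.2 (by simpa using ⟨_, hx⟩))
  have hon : Orthonormal ℂ (fun n => (f n).2) :=
    aw_orthonormal (fun n => (hf n).1) (fun m n h => (hr m n h).2)
  have hmono : StrictMono (fun n => (f n).1) := fun m n h => (hr m n h).1
  refine ⟨_, awSpan_big hon, fun n => awSpan_awLe hon (hV n).1 n fun k hk => ?_⟩
  exact (hf k).2 n (hk.trans (hmono.id_le k))

lemma aw_chain (hinf : ¬ FiniteDimensional ℂ H) (C : Set (Submodule ℂ H)) (hC : C.Countable)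
    (hV : ∀ V ∈ C, awBig V) (hc : ∀ x ∈ C, ∀ y ∈ C, awLe x y ∨ awLe y x) :
    ∃ W, awBig W ∧ ∀ V ∈ C, awLe W V := by
  rcases C.eq_empty_or_nonempty with rfl | hne
  · refine ⟨⊤, ⟨isClosed_univ, fun h => hinf ?_⟩, by simp⟩
    exact Module.Finite.equiv (Submodule.topEquiv (R := ℂ) (M := H))
  · obtain ⟨f, rfl⟩ := hC.exists_eq_range hne
    obtain ⟨W, h, h'⟩ := aw_chain_seq f (fun n => hV _ ⟨n, rfl⟩)
      (fun m n => hc _ ⟨m, rfl⟩ _ ⟨n, rfl⟩)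
    exact ⟨W, h, by rintro _ ⟨n, rfl⟩; exact h' n⟩

lemma aw_span_induct {v : ℕ → H} {p : H → Prop} (hp : IsClosed {x | p x})
    (h : ∀ c : ℕ →₀ ℂ, p (c.sum fun i a => a • v i)) {w : H} (hw : w ∈ awSpan v) : p w := by
  have : (awSpan v : Set H) ⊆ {x | p x} := by
    rw [awSpan, Submodule.topologicalClosure_coe]
    apply closure_minimal _ hp
    intro x hx
    obtain ⟨c, rfl⟩ := (Finsupp.mem_span_range_iff_exists_finsupp).1 hx
    exact h c
  exact this hw

lemma aw_norm_sq {v : ℕ → H} (hv : Orthonormal ℂ v) (c : ℕ →₀ ℂ) :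
    ‖c.sum fun i a => a • v i‖ ^ 2 = ∑ i ∈ c.support, ‖c i‖ ^ 2 := by
  have h := hv.inner_sum c c c.support
  have h2 : inner ℂ (c.sum fun i a => a • v i) (c.sum fun i a => a • v i) =
    ((‖c.sum fun i a => a • v i‖ ^ 2 : ℝ) : ℂ) := by
    rw [inner_self_eq_norm_sq_to_K]; simp
  rw [Finsupp.sum] at h2 ⊢
  rw [h2] at h
  have : ∑ i ∈ c.support, (starRingEnd ℂ) (c i) * c i
    = ((∑ i ∈ c.support, ‖c i‖ ^ 2 : ℝ) : ℂ) := by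
    push_cast
    refine Finset.sum_congr rfl fun i _ => ?_
    rw [Complex.conj_mul']
  rw [this] at h
  exact_mod_cast h

lemma aw_diag {u : ℕ → H} (hu : Orthonormal ℂ u) (a : H →L[ℂ] H) (l : ℂ) (ε : ℝ)
    (h0 : ∀ i j, i ≠ j → inner ℂ (u i) (a (u j)) = 0)
    (h1 : ∀ i, ‖inner ℂ (u i) (a (u i)) - l‖ ≤ ε) {w : H} (hw : w ∈ awSpan u) :
    ‖inner ℂ w (a w) - l * (‖w‖ : ℂ) ^ 2‖ ≤ ε * ‖w‖ ^ 2 := by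
  refine aw_span_induct (p := fun w => ‖inner ℂ w (a w) - l * (‖w‖ : ℂ) ^ 2‖ ≤ ε * ‖w‖ ^ 2)
    ?_ ?_ hw
  · apply isClosed_le <;> fun_prop
  · intro c
    have e2 := aw_norm_sq hu c
    have e2' : ((‖c.sum fun i a => a • u i‖ : ℂ)) ^ 2 = ∑ i ∈ c.support, (‖c i‖ : ℂ) ^ 2 := by
      exact_mod_cast congrArg (fun x : ℝ => (x : ℂ)) e2
    rw [e2, e2']
    have e1 : inner ℂ (c.sum fun i a => a • u i) (a (c.sum fun i a => a • u i)) =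
        ∑ i ∈ c.support, (‖c i‖ : ℂ) ^ 2 * inner ℂ (u i) (a (u i)) := by
      rw [Finsupp.sum, map_sum, sum_inner]
      refine Finset.sum_congr rfl fun i hi => ?_
      rw [inner_sum, Finset.sum_eq_single i]
      · rw [map_smul, inner_smul_left, inner_smul_right, ← Complex.conj_mul']; ring
      · intro j _ hj
        rw [map_smul, inner_smul_left, inner_smul_right, h0 i j hj.symm]; simp
      · intro h; exact (h hi).elim
    rw [e1, Finset.mul_sum, ← Finset.sum_sub_distrib, Finset.mul_sum]
    refine (norm_sum_le _ _).trans (Finset.sum_le_sum fun i _ => ?_)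
    have : (‖c i‖ : ℂ) ^ 2 * inner ℂ (u i) (a (u i)) - l * (‖c i‖ : ℂ) ^ 2 =
      (‖c i‖ : ℂ) ^ 2 * (inner ℂ (u i) (a (u i)) - l) := by ring
    rw [this, norm_mul, mul_comm]
    have h3 : ‖(‖c i‖ : ℂ) ^ 2‖ = ‖c i‖ ^ 2 := by simp
    rw [h3]
    exact mul_le_mul_of_nonneg_right (h1 i) (by positivity)

lemma aw_small {v : ℕ → H} (hv : Orthonormal ℂ v) (B : H →L[ℂ] H) (ε : ℕ → ℝ) (η : ℝ)
    (h : ∀ k, ‖B (v k)‖ ≤ ε k) (hη : ∀ s : Finset ℕ, ∑ k ∈ s, ε k ≤ η) {w : H}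
    (hw : w ∈ awSpan v) : ‖B w‖ ≤ η * ‖w‖ := by
  refine aw_span_induct (p := fun w => ‖B w‖ ≤ η * ‖w‖) ?_ ?_ hw
  · apply isClosed_le <;> fun_prop
  · intro c
    have hc : ∀ i ∈ c.support, ‖c i‖ ≤ ‖c.sum fun i a => a • v i‖ := by
      intro i hi
      apply le_of_sq_le_sq _ (norm_nonneg _)
      rw [aw_norm_sq hv]
      exact Finset.single_le_sum (f := fun i => ‖c i‖ ^ 2) (fun _ _ => by positivity) hi
    set N := ‖c.sum fun i a => a • v i‖ with hN
    have hN0 : 0 ≤ N := norm_nonneg _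
    calc ‖B (c.sum fun i a => a • v i)‖ ≤ ∑ i ∈ c.support, ‖B (c i • v i)‖ := by
          rw [Finsupp.sum, map_sum]; exact norm_sum_le _ _
      _ ≤ ∑ i ∈ c.support, ε i * N := by
          refine Finset.sum_le_sum fun i hi => ?_
          rw [map_smul, norm_smul, mul_comm]
          exact mul_le_mul (h i) (hc i hi) (norm_nonneg _) ((norm_nonneg _).trans (h i))
      _ ≤ η * N := by
          rw [← Finset.sum_mul]
          exact mul_le_mul_of_nonneg_right (hη _) hN0

lemma aw_dense1 {V : Submodule ℂ H} (hV : awBig V) (a : H →L[ℂ] H) {ε : ℝ} (hε : 0 < ε) :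
    ∃ W ≤ V, awBig W ∧ ∃ l : ℂ, ∀ w ∈ W,
      ‖inner ℂ w (a w) - l * (‖w‖ : ℂ) ^ 2‖ ≤ ε * ‖w‖ ^ 2 := by
  classical
  obtain ⟨v, hv, hr⟩ := exists_seq_of_forall_finset_exists
    (fun x : H => ‖x‖ = 1 ∧ x ∈ V)
    (fun x y => inner ℂ x y = 0 ∧ inner ℂ x (a y) = 0 ∧ inner ℂ y (a x) = 0) (by
      intro s _
      set t : Set H := (s : Set H) ∪ a '' s ∪ a.adjoint '' s with ht
      have hfin : t.Finite := by
        rw [ht]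
        exact ((Finset.finite_toSet _).union ((Finset.finite_toSet _).image _)).union
          ((Finset.finite_toSet _).image _)
      have : FiniteDimensional ℂ (Submodule.span ℂ t) := FiniteDimensional.span_of_finite ℂ hfin
      obtain ⟨v, hv, hv', h1⟩ := aw_exists_unit (F := Submodule.span ℂ t) hV.2
      refine ⟨v, ⟨h1, hv⟩, fun x hx => ⟨aw_mem_perp_span hv' (Or.inl (Or.inl hx)), ?_, ?_⟩⟩
      · rw [← ContinuousLinearMap.adjoint_inner_left]
        exact aw_mem_perp_span hv' (Or.inr ⟨x, hx, rfl⟩)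
      · rw [← inner_conj_symm, aw_mem_perp_span hv' (Or.inl (Or.inr ⟨x, hx, rfl⟩)), map_zero])
  obtain ⟨l, -, φ, hφ, hl⟩ := tendsto_subseq_of_bounded (Metric.isBounded_closedBall (x := (0:ℂ))
    (r := ‖a‖)) (x := fun n => inner ℂ (v n) (a (v n))) (by
      intro n
      rw [mem_closedBall_zero_iff]
      refine (norm_inner_le_norm _ _).trans ?_
      rw [(hv n).1, one_mul]
      simpa [(hv n).1] using a.le_opNorm (v n))
  obtain ⟨N, hN⟩ := (Metric.tendsto_atTop.1 hl) ε hε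
  have hinj : Function.Injective (fun k => φ (k + N)) := fun i j h => by
    have := hφ.injective h; omega
  have hon : Orthonormal ℂ v := aw_orthonormal (fun n => (hv n).1) (fun m n h => (hr m n h).1)
  have hon' : Orthonormal ℂ (fun k => v (φ (k + N))) := hon.comp _ hinj
  refine ⟨_, awSpan_le hV.1 fun n => (hv _).2, awSpan_big hon', l, fun w hw => ?_⟩
  refine aw_diag hon' a l ε ?_ ?_ hw
  · intro i j hij
    have : φ (i + N) ≠ φ (j + N) := fun h => hij (hinj h)
    rcases lt_or_gt_of_ne this with h | h
    · exact (hr _ _ h).2.1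
    · exact (hr _ _ h).2.2
  · intro i
    have := hN (i + N) (by omega)
    rw [dist_eq_norm] at this
    exact this.le

end geom


section ops
set_option linter.unusedSectionVars false
set_option linter.unusedSimpArgs false
set_option linter.deprecated false
open Filter Topology
variable {H : Type} [NormedAddCommGroup H] [InnerProductSpace ℂ H] [CompleteSpace H]

/-- Real quadratic form of an operator. -/
noncomputable def awQ (T : H →L[ℂ] H) (x : H) : ℝ := (inner ℂ x (T x)).re

lemma awQ_add (S T : H →L[ℂ] H) (x : H) : awQ (S + T) x = awQ S x + awQ T x := by
  simp [awQ, inner_add_right]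

lemma awQ_sub (S T : H →L[ℂ] H) (x : H) : awQ (S - T) x = awQ S x - awQ T x := by
  simp [awQ, inner_sub_right]

lemma awQ_one (x : H) : awQ (1 : H →L[ℂ] H) x = ‖x‖ ^ 2 := by
  rw [awQ, ContinuousLinearMap.one_apply]
  exact inner_self_eq_norm_sq (𝕜 := ℂ) x

lemma awQ_nonneg {T : H →L[ℂ] H} (h : 0 ≤ T) (x : H) : 0 ≤ awQ T x :=
  ((ContinuousLinearMap.nonneg_iff_isPositive T).1 h).re_inner_nonneg_right x

lemma awQ_mono {S T : H →L[ℂ] H} (h : S ≤ T) (x : H) : awQ S x ≤ awQ T x := by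
  have := awQ_nonneg (sub_nonneg.2 h) x
  rw [awQ_sub] at this; linarith

lemma aw_sa {T : H →L[ℂ] H} (h : 0 ≤ T) : IsSelfAdjoint T := IsSelfAdjoint.of_nonneg h

lemma aw_sa_inner {T : H →L[ℂ] H} (h : IsSelfAdjoint T) (x y : H) :
    inner ℂ (T x) y = inner ℂ x (T y) :=
  h.isSymmetric x y

lemma aw_nonneg_of {T : H →L[ℂ] H} (hsa : IsSelfAdjoint T) (h : ∀ x, 0 ≤ awQ T x) : 0 ≤ T := by
  rw [ContinuousLinearMap.nonneg_iff_isPositive, ContinuousLinearMap.isPositive_def']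
  refine ⟨hsa, fun x => ?_⟩
  rw [ContinuousLinearMap.reApplyInnerSelf_apply, aw_sa_inner hsa]
  exact h x

lemma aw_sq_le {T : H →L[ℂ] H} (h0 : 0 ≤ T) (h1 : T ≤ 1) (x : H) : ‖T x‖ ^ 2 ≤ awQ T x := by
  have h : 0 ≤ T * (1 - T) := Commute.mul_nonneg h0 (sub_nonneg.2 h1)
    ((Commute.one_right T).sub_right (Commute.refl T))
  have := awQ_nonneg h x
  rw [mul_sub, mul_one, awQ_sub] at this
  have e : awQ (T * T) x = ‖T x‖ ^ 2 := by
    rw [awQ, ContinuousLinearMap.mul_apply, ← aw_sa_inner (aw_sa h0)]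
    exact inner_self_eq_norm_sq (𝕜 := ℂ) (T x)
  linarith

lemma aw_vigier (T : ℕ → H →L[ℂ] H) (hm : Monotone T) (h0 : ∀ n, 0 ≤ T n) (h1 : ∀ n, T n ≤ 1) :
    ∃ S : H →L[ℂ] H, ∀ x, Tendsto (fun n => T n x) atTop (𝓝 (S x)) := by
  have hex : ∀ x, ∃ y, Tendsto (fun n => T n x) atTop (𝓝 y) := by
    intro x
    apply cauchySeq_tendsto_of_complete
    have hq : Monotone (fun n => awQ (T n) x) := fun m n h => awQ_mono (hm h) x
    have hb : BddAbove (Set.range fun n => awQ (T n) x) :=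
      ⟨awQ 1 x, by rintro _ ⟨n, rfl⟩; exact awQ_mono (h1 n) x⟩
    have hc := (tendsto_atTop_ciSup hq hb).cauchySeq
    rw [Metric.cauchySeq_iff'] at hc ⊢
    intro ε hε
    obtain ⟨N, hN⟩ := hc (ε ^ 2) (by positivity)
    refine ⟨N, fun n hn => ?_⟩
    have h2 := hN n hn
    rw [Real.dist_eq, abs_of_nonneg (sub_nonneg.2 (hq hn))] at h2
    have h3 := aw_sq_le (sub_nonneg.2 (hm hn)) ((sub_le_self _ (h0 N)).trans (h1 n)) x
    rw [awQ_sub] at h3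
    rw [dist_eq_norm, ← ContinuousLinearMap.sub_apply]
    exact lt_of_pow_lt_pow_left₀ 2 hε.le (h3.trans_lt h2)
  choose f hf using hex
  exact ⟨continuousLinearMapOfTendsto T (tendsto_pi_nhds.2 hf), fun x => hf x⟩

lemma awQ_tendsto {T : ℕ → H →L[ℂ] H} {S : H →L[ℂ] H} {x : H}
    (h : Tendsto (fun n => T n x) atTop (𝓝 (S x))) :
    Tendsto (fun n => awQ (T n) x) atTop (𝓝 (awQ S x)) :=
  (Complex.continuous_re.tendsto _).comp (tendsto_const_nhds.inner h)

lemma aw_sa_lim {T : ℕ → H →L[ℂ] H} {S : H →L[ℂ] H} (hT : ∀ n, IsSelfAdjoint (T n))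
    (h : ∀ x, Tendsto (fun n => T n x) atTop (𝓝 (S x))) : IsSelfAdjoint S := by
  rw [ContinuousLinearMap.isSelfAdjoint_iff_isSymmetric]
  intro x y
  have h1 : Tendsto (fun n => inner ℂ (T n x) y) atTop (𝓝 (inner ℂ (S x) y)) :=
    (h x).inner tendsto_const_nhds
  have h2 : Tendsto (fun n => inner ℂ x (T n y)) atTop (𝓝 (inner ℂ x (S y))) :=
    tendsto_const_nhds.inner (h y)
  refine tendsto_nhds_unique h1 (h2.congr fun n => ?_)
  rw [aw_sa_inner (hT n)]

lemma aw_commute_lim {T : ℕ → H →L[ℂ] H} {S b : H →L[ℂ] H} (hT : ∀ n, Commute b (T n))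
    (h : ∀ x, Tendsto (fun n => T n x) atTop (𝓝 (S x))) : Commute b S := by
  ext x
  have h1 : Tendsto (fun n => b (T n x)) atTop (𝓝 (b (S x))) := (b.continuous.tendsto _).comp (h x)
  refine tendsto_nhds_unique h1 ((h (b x)).congr fun n => ?_)
  exact (congrArg (fun f : H →L[ℂ] H => f x) (hT n).eq).symm

section powers
variable {c : H →L[ℂ] H} (h0 : 0 ≤ c) (h1 : c ≤ 1)
include h0

lemma aw_pow_nonneg (n : ℕ) : 0 ≤ c ^ n := by
  induction n with
  | zero => simp
  | succ n ih => rw [pow_succ]; exact Commute.mul_nonneg ih h0 ((Commute.refl c).pow_left n)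

include h1
lemma aw_pow_anti : Antitone (fun n => c ^ n) := by
  apply antitone_nat_of_succ_le
  intro n
  rw [← sub_nonneg]
  have : c ^ n - c ^ (n + 1) = c ^ n * (1 - c) := by rw [pow_succ, mul_sub, mul_one]
  rw [this]
  exact Commute.mul_nonneg (aw_pow_nonneg h0 n) (sub_nonneg.2 h1)
    ((Commute.one_right _).sub_right ((Commute.refl c).pow_left n))

lemma aw_pow_le_one (n : ℕ) : c ^ n ≤ 1 := by
  simpa using aw_pow_anti h0 h1 (Nat.zero_le n)

lemma aw_pow_tendsto (hinj : ∀ x, c x = x → x = 0) (x : H) :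
    Tendsto (fun n => awQ (c ^ n) x) atTop (𝓝 0) := by
  obtain ⟨S, hS⟩ := aw_vigier (fun n => 1 - c ^ n)
    (fun m n h => sub_le_sub_left (aw_pow_anti h0 h1 h) _)
    (fun n => sub_nonneg.2 (aw_pow_le_one h0 h1 n))
    (fun n => sub_le_self _ (aw_pow_nonneg h0 n))
  have hL : ∀ x, Tendsto (fun n => (c ^ n) x) atTop (𝓝 (x - S x)) := by
    intro x
    refine (tendsto_const_nhds.sub (hS x)).congr fun n => ?_
    simp
  have hfix : c (x - S x) = x - S x := by
    have a1 : Tendsto (fun n => c ((c ^ n) x)) atTop (𝓝 (c (x - S x))) :=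
      (c.continuous.tendsto _).comp (hL x)
    refine tendsto_nhds_unique a1 (((tendsto_add_atTop_iff_nat 1).2 (hL x)).congr fun n => ?_)
    rw [pow_succ']; rfl
  have hz := hinj _ hfix
  have := hL x
  rw [hz] at this
  have h2 := awQ_tendsto (T := fun n => c ^ n) (S := 0) (x := x) this
  have h3 : awQ (0 : H →L[ℂ] H) x = 0 := by simp [awQ]
  rwa [h3] at h2

lemma aw_bernoulli (n : ℕ) (x : H) : awQ (1 - c ^ n) x ≤ n * awQ (1 - c) x := by
  induction n with
  | zero => simp [awQ]
  | succ n ih =>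
    have e : 1 - c ^ (n + 1) = (1 - c ^ n) + ((1 - c) - (1 - c ^ n) * (1 - c)) := by
      rw [pow_succ]; noncomm_ring
    have hpos : 0 ≤ (1 - c ^ n) * (1 - c) := by
      apply Commute.mul_nonneg (sub_nonneg.2 (aw_pow_le_one h0 h1 n)) (sub_nonneg.2 h1)
      apply Commute.sub_left (Commute.one_left _)
      exact (Commute.one_right _).sub_right ((Commute.refl c).pow_left n)
    have := awQ_nonneg hpos x
    rw [e, awQ_add, awQ_sub (1 - c)]
    push_cast
    linarith

end powers
end ops


section dense2
open Filter Topology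
set_option linter.unusedSectionVars false
set_option linter.unusedSimpArgs false
set_option linter.deprecated false
variable {H : Type} [NormedAddCommGroup H] [InnerProductSpace ℂ H] [CompleteSpace H]

lemma aw_seq {V : Submodule ℂ H} {c : H →L[ℂ] H} (h0 : 0 ≤ c) (h1 : c ≤ 1)
    (hinj : ∀ x, c x = x → x = 0)
    (hB : ∀ δ : ℝ, 0 < δ → ∀ F : Submodule ℂ H, FiniteDimensional ℂ F →
      ∃ v ∈ V, v ∈ Fᗮ ∧ ‖v‖ = 1 ∧ awQ (1 - c) v < δ) :
    ∃ (v : ℕ → H) (n m : ℕ → ℕ), Orthonormal ℂ v ∧ (∀ k, v k ∈ V) ∧ (∀ k, n k ≤ m k) ∧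
      (∀ k, m k ≤ n (k + 1)) ∧ (∀ k, k + 10 ≤ n k) ∧
      ∀ k, 1 - ((1 / 2 : ℝ) ^ (n k)) ^ 2 ≤ awQ (c ^ (n k) - c ^ (m k)) (v k) := by
  classical
  obtain ⟨f, hf, hr⟩ := exists_seq_of_forall_finset_exists
    (fun x : H × ℕ × ℕ => ‖x.1‖ = 1 ∧ x.1 ∈ V ∧ x.2.1 < x.2.2 ∧ 10 ≤ x.2.1 ∧
      1 - ((1 / 2 : ℝ) ^ x.2.1) ^ 2 ≤ awQ (c ^ x.2.1 - c ^ x.2.2) x.1)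
    (fun x y => inner ℂ x.1 y.1 = 0 ∧ x.2.2 ≤ y.2.1) (by
      intro s _
      set N := s.sup (fun x => x.2.2) + 10 with hN
      set e : ℝ := ((1 / 2 : ℝ) ^ N) ^ 2 with he
      have he0 : 0 < e := by positivity
      have : FiniteDimensional ℂ (Submodule.span ℂ ((s.image Prod.fst : Finset H) : Set H)) :=
        FiniteDimensional.span_of_finite ℂ (Finset.finite_toSet _)
      obtain ⟨v, hv, hv', hv1, hvd⟩ := hB (e / 2 / (N + 1)) (by positivity) _ this
      obtain ⟨m, hm, hm'⟩ := (((aw_pow_tendsto h0 h1 hinj v).eventually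
        (gt_mem_nhds (half_pos he0))).and (eventually_gt_atTop N)).exists
      refine ⟨(v, N, m), ⟨hv1, hv, hm', by simp [hN], ?_⟩, fun x hx => ⟨?_, ?_⟩⟩
      · have b := aw_bernoulli h0 h1 N v
        rw [awQ_sub, awQ_one, hv1] at b
        have hd : (N : ℝ) * awQ (1 - c) v ≤ e / 2 := by
          rw [lt_div_iff₀ (by positivity)] at hvd
          have := awQ_nonneg (sub_nonneg.2 h1) v
          nlinarith
        simp only [awQ_sub] at *
        linarith
      · exact aw_mem_perp_span hv' (by simpa using ⟨_, _, hx⟩)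
      · exact (Finset.le_sup (f := fun x : H × ℕ × ℕ => x.2.2) hx).trans (by simp [hN]))
  refine ⟨fun k => (f k).1, fun k => (f k).2.1, fun k => (f k).2.2,
    aw_orthonormal (fun k => (hf k).1) (fun m n h => (hr m n h).1), fun k => (hf k).2.1,
    fun k => (hf k).2.2.1.le, fun k => (hr k (k + 1) (by omega)).2, fun k => ?_,
    fun k => (hf k).2.2.2.2⟩
  induction k with
  | zero => simpa using (hf 0).2.2.2.1
  | succ k ih =>
    have a1 := (hr k (k + 1) (by omega)).2
    have a2 := (hf k).2.2.1
    dsimp only at *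
    omega

lemma aw_split {c : H →L[ℂ] H} (h0 : 0 ≤ c) (h1 : c ≤ 1) (v : ℕ → H) (n m : ℕ → ℕ)
    (hv : ∀ k, ‖v k‖ = 1)
    (hnm : ∀ k, n k ≤ m k) (hmn : ∀ k, m k ≤ n (k + 1))
    (hq : ∀ k, 1 - ((1 / 2 : ℝ) ^ (n k)) ^ 2 ≤ awQ (c ^ (n k) - c ^ (m k)) (v k)) :
    ∃ S : H →L[ℂ] H, 0 ≤ S ∧ S ≤ 1 ∧ (∀ b, Commute b c → Commute b S) ∧
      (∀ k, Even k → ‖S (v k) - v k‖ ≤ (1 / 2 : ℝ) ^ (n k)) ∧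
      (∀ k, ¬ Even k → ‖S (v k)‖ ≤ (1 / 2 : ℝ) ^ (n k)) := by
  classical
  set d : ℕ → H →L[ℂ] H := fun k => c ^ (n k) - c ^ (m k) with hd
  have hd0 : ∀ k, 0 ≤ d k := fun k => sub_nonneg.2 (aw_pow_anti h0 h1 (hnm k))
  let T : ℕ → H →L[ℂ] H := fun K => ∑ k ∈ Finset.range K, if Even k then d k else 0
  let U : ℕ → H →L[ℂ] H := fun K => ∑ k ∈ Finset.range K, if Even k then 0 else d k
  have hTt : ∀ k, 0 ≤ (if Even k then d k else 0) := fun k => by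
    split_ifs; exacts [hd0 k, le_rfl]
  have hUt : ∀ k, 0 ≤ (if Even k then 0 else d k) := fun k => by
    split_ifs; exacts [le_rfl, hd0 k]
  have hT0 : ∀ K, 0 ≤ T K := fun K => Finset.sum_nonneg fun k _ => hTt k
  have hU0 : ∀ K, 0 ≤ U K := fun K => Finset.sum_nonneg fun k _ => hUt k
  have hTm : Monotone T := monotone_nat_of_le_succ fun K => by
    simp only [T, Finset.sum_range_succ]; exact le_add_of_nonneg_right (hTt K)
  have hTU : ∀ K, T K + U K ≤ 1 := by
    have : ∀ K, T K + U K + c ^ (n K) ≤ 1 := by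
      intro K
      induction K with
      | zero => simpa [T, U] using aw_pow_le_one h0 h1 (n 0)
      | succ K ih =>
        refine le_trans ?_ ih
        have e : T (K + 1) + U (K + 1) = T K + U K + d K := by
          simp only [T, U, Finset.sum_range_succ]
          split_ifs <;> abel
        rw [e, add_assoc]
        have : d K + c ^ n (K + 1) ≤ c ^ n K := by
          have := aw_pow_anti h0 h1 (hmn K)
          simp only [hd] at *
          rw [sub_add_eq_add_sub, sub_le_iff_le_add]
          gcongr
        gcongr
    exact fun K => (le_add_of_nonneg_right (aw_pow_nonneg h0 _)).trans (this K)
  have hT1 : ∀ K, T K ≤ 1 := fun K => (le_add_of_nonneg_right (hU0 K)).trans (hTU K)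
  obtain ⟨S, hS⟩ := aw_vigier T hTm hT0 hT1
  have hsa : IsSelfAdjoint S := aw_sa_lim (fun n => aw_sa (hT0 n)) hS
  have hS0 : 0 ≤ S := aw_nonneg_of hsa fun x =>
    ge_of_tendsto' (awQ_tendsto (hS x)) fun K => awQ_nonneg (hT0 K) x
  have hS1 : S ≤ 1 := sub_nonneg.1 (aw_nonneg_of ((IsSelfAdjoint.one _).sub hsa) fun x => by
    rw [awQ_sub, sub_nonneg]
    exact le_of_tendsto' (awQ_tendsto (hS x)) fun K => awQ_mono (hT1 K) x)
  refine ⟨S, hS0, hS1, fun b hb => ?_, fun k hk => ?_, fun k hk => ?_⟩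
  · refine aw_commute_lim (T := T) (fun K => ?_) hS
    refine Commute.sum_right _ _ _ fun k _ => ?_
    split_ifs
    · exact (hb.pow_right _).sub_right (hb.pow_right _)
    · exact Commute.zero_right _
  · have h2 : awQ (d k) (v k) ≤ awQ S (v k) := by
      refine ge_of_tendsto (awQ_tendsto (hS (v k))) ?_
      filter_upwards [eventually_gt_atTop k] with K hK
      apply awQ_mono
      have := Finset.single_le_sum (f := fun k => if Even k then d k else 0)
        (fun k _ => hTt k) (Finset.mem_range.2 hK)
      simpa [hk] using this
    have h3 := aw_sq_le (sub_nonneg.2 hS1) (sub_le_self _ hS0) (v k)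
    rw [awQ_sub, awQ_one, hv] at h3
    have h4 := hq k
    have h5 : ‖(1 - S) (v k)‖ ^ 2 ≤ ((1 / 2 : ℝ) ^ (n k)) ^ 2 := by
      simp only [hd] at h2
      linarith
    rw [norm_sub_rev]
    exact le_of_sq_le_sq h5 (by positivity)
  · have h2 : awQ S (v k) ≤ awQ (1 - d k) (v k) := by
      refine le_of_tendsto (awQ_tendsto (hS (v k))) ?_
      filter_upwards [eventually_gt_atTop k] with K hK
      apply awQ_mono
      have := Finset.single_le_sum (f := fun k => if Even k then 0 else d k)
        (fun k _ => hUt k) (Finset.mem_range.2 hK)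
      have h6 : d k ≤ U K := by simpa [hk] using this
      have h7 := hTU K
      rw [le_sub_iff_add_le]
      exact (add_le_add_right h6 _).trans h7
    have h3 := aw_sq_le hS0 hS1 (v k)
    rw [awQ_sub, awQ_one, hv] at h2
    have h4 := hq k
    have h5 : ‖S (v k)‖ ^ 2 ≤ ((1 / 2 : ℝ) ^ (n k)) ^ 2 := by
      simp only [hd] at h2
      linarith
    exact le_of_sq_le_sq h5 (by positivity)

lemma aw_dense2 {V : Submodule ℂ H} (hV : awBig V) {c : H →L[ℂ] H} (h0 : 0 ≤ c) (h1 : c ≤ 1)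
    (hinj : ∀ x, c x = x → x = 0)
    (hB : ∀ δ : ℝ, 0 < δ → ∀ F : Submodule ℂ H, FiniteDimensional ℂ F →
      ∃ v ∈ V, v ∈ Fᗮ ∧ ‖v‖ = 1 ∧ awQ (1 - c) v < δ) :
    ∃ W ≤ V, awBig W ∧ ∃ S : H →L[ℂ] H, 0 ≤ S ∧ S ≤ 1 ∧ (∀ b, Commute b c → Commute b S) ∧
      ∀ w ∈ W, ‖w‖ = 1 → 1 / 4 ≤ awQ S w ∧ awQ S w ≤ 3 / 4 ∧ awQ S w - awQ (S * S) w ≤ 1 / 8 := by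
  classical
  obtain ⟨v, n, m, hv, hvV, hnm, hmn, hn, hq⟩ := aw_seq h0 h1 hinj hB
  obtain ⟨S, hS0, hS1, hSc, hSe, hSo⟩ := aw_split h0 h1 v n m hv.1 hnm hmn hq
  let E : Submodule ℂ H := awSpan (fun j => v (2 * j))
  have : CompleteSpace E := (Submodule.isClosed_topologicalClosure _).completeSpace_coe
  set P : H →L[ℂ] H := E.starProjection with hP
  have hPe : ∀ j, P (v (2 * j)) = v (2 * j) := fun j =>
    Submodule.starProjection_eq_self_iff.2 (aw_mem_span (fun j => v (2 * j)) j)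
  have hPo : ∀ j, P (v (2 * j + 1)) = 0 := fun j => by
    rw [hP, Submodule.starProjection_apply_eq_zero_iff, Submodule.mem_orthogonal]
    intro u hu
    refine aw_span_induct (v := fun j => v (2 * j)) (p := fun u => inner ℂ u (v (2 * j + 1)) = 0)
      (isClosed_eq (by fun_prop) (by fun_prop)) (fun c => ?_) hu
    rw [Finsupp.sum, sum_inner]
    refine Finset.sum_eq_zero fun i _ => ?_
    rw [inner_smul_left, hv.2 (by omega), mul_zero]
  let r : ℂ := ((Real.sqrt 2)⁻¹ : ℝ)
  have hr : r * r = 1 / 2 := by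
    simp only [r]
    rw [← Complex.ofReal_mul, ← mul_inv, Real.mul_self_sqrt (by norm_num)]
    norm_num
  have hrc : (starRingEnd ℂ) r = r := Complex.conj_ofReal _
  let u : ℕ → H := fun j => r • (v (2 * j) + v (2 * j + 1))
  have hvv : ∀ i j, inner ℂ (v i) (v j) = if i = j then (1 : ℂ) else 0 :=
    orthonormal_iff_ite.1 hv
  have huu : ∀ i j, inner ℂ (u i) (u j) = if i = j then (1 : ℂ) else 0 := by
    intro i j
    simp only [u, inner_smul_left, inner_smul_right, inner_add_left, inner_add_right, hvv, hrc]
    by_cases hij : i = j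
    · subst hij
      simp
      linear_combination 2 * hr
    · have a1 : 2 * i ≠ 2 * j := by omega
      have a2 : 2 * i + 1 ≠ 2 * j := by omega
      have a3 : 2 * i ≠ 2 * j + 1 := by omega
      simp [hij, a2, a3]
  have hu : Orthonormal ℂ u := orthonormal_iff_ite.2 huu
  have huP : ∀ i j, inner ℂ (u i) (P (u j)) = if i = j then (1 / 2 : ℂ) else 0 := by
    intro i j
    simp only [u, map_smul, map_add, hPe, hPo, inner_smul_left, inner_smul_right, inner_add_left,
      inner_add_right, hvv, hrc, inner_zero_right]
    by_cases hij : i = j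
    · subst hij
      simp
      linear_combination hr
    · have a2 : 2 * i + 1 ≠ 2 * j := by omega
      simp [hij, a2]
  have huv : ∀ j, u j ∈ awSpan v := fun j =>
    Submodule.smul_mem _ _ (Submodule.add_mem _ (aw_mem_span _ _) (aw_mem_span _ _))
  have huV : ∀ j, u j ∈ V := fun j =>
    Submodule.smul_mem _ _ (Submodule.add_mem _ (hvV _) (hvV _))
  have hle : awSpan u ≤ awSpan v := awSpan_le (awSpan_big hv).1 huv
  refine ⟨awSpan u, awSpan_le hV.1 huV, awSpan_big hu, S, hS0, hS1, hSc, fun w hw hw1 => ?_⟩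
  have hB1 : ‖(S - P) w‖ ≤ (1 / 100) * ‖w‖ := by
    refine aw_small hv (S - P) (fun k => (1 / 2 : ℝ) ^ (k + 10)) _ (fun k => ?_) (fun s => ?_)
      (hle hw)
    · have : (1 / 2 : ℝ) ^ (n k) ≤ (1 / 2 : ℝ) ^ (k + 10) :=
        pow_le_pow_of_le_one (by norm_num) (by norm_num) (hn k)
      refine le_trans ?_ this
      rw [ContinuousLinearMap.sub_apply]
      by_cases hk : Even k
      · obtain ⟨j, rfl⟩ := hk.exists_two_nsmul
        have := hSe _ hk
        simp only [smul_eq_mul] at *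
        rw [hPe]; exact this
      · have := hSo _ hk
        obtain ⟨j, rfl⟩ := Nat.not_even_iff_odd.1 hk
        rw [hPo, sub_zero]; exact this
    · have hs : Summable (fun k : ℕ => (1 / 2 : ℝ) ^ k) := summable_geometric_two
      have h2 := hs.sum_le_tsum s (fun _ _ => by positivity)
      rw [tsum_geometric_two] at h2
      simp only [pow_add]
      rw [← Finset.sum_mul]
      calc _ ≤ 2 * (1 / 2 : ℝ) ^ 10 := by gcongr
        _ ≤ 1 / 100 := by norm_num
  rw [hw1, mul_one] at hB1
  have hPw : inner ℂ w (P w) = (1 / 2 : ℂ) := by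
    have := aw_diag hu P (1 / 2) 0 (fun i j hij => by rw [huP, if_neg hij])
      (fun i => by rw [huP]; simp) hw
    rw [hw1, zero_mul, norm_le_zero_iff, sub_eq_zero] at this
    simpa using this
  have hPsa : IsSelfAdjoint P := isSelfAdjoint_starProjection E
  have hPP : ∀ x, P (P x) = P x := fun x =>
    Submodule.starProjection_eq_self_iff.2 (Submodule.starProjection_apply_mem _ _)
  set b := (S - P) w with hb
  have hSw : S w = P w + b := by simp [hb]
  have hPwn : ‖P w‖ ^ 2 = 1 / 2 := by
    have h2 : inner ℂ (P w) (P w) = (1 / 2 : ℂ) := by rw [aw_sa_inner hPsa, hPP, hPw]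
    have h3 := inner_self_eq_norm_sq (𝕜 := ℂ) (P w)
    rw [h2] at h3
    rw [← h3]; simp
  have hPle : ‖P w‖ ≤ 1 := by
    nlinarith [norm_nonneg (P w)]
  have q1 : awQ S w = 1 / 2 + (inner ℂ w b).re := by
    rw [awQ, hSw, inner_add_right, hPw]; simp
  have q2 : |(inner ℂ w b).re| ≤ 1 / 100 := by
    refine (Complex.abs_re_le_norm _).trans ((norm_inner_le_norm _ _).trans ?_)
    rw [hw1, one_mul]; exact hB1
  have q3 : awQ (S * S) w = ‖P w + b‖ ^ 2 := by
    rw [awQ, ContinuousLinearMap.mul_apply, ← aw_sa_inner (aw_sa hS0), hSw]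
    exact inner_self_eq_norm_sq (𝕜 := ℂ) _
  have q4 : ‖P w + b‖ ^ 2 = ‖P w‖ ^ 2 + 2 * (inner ℂ (P w) b).re + ‖b‖ ^ 2 :=
    norm_add_sq (𝕜 := ℂ) _ _
  have q5 : |(inner ℂ (P w) b).re| ≤ 1 / 100 := by
    refine (Complex.abs_re_le_norm _).trans ((norm_inner_le_norm _ _).trans ?_)
    calc ‖P w‖ * ‖b‖ ≤ 1 * (1 / 100) := by gcongr
      _ = _ := by norm_num
  rw [abs_le] at q2 q5
  refine ⟨by linarith, by linarith, ?_⟩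
  rw [q3, q4, hPwn, q1]
  nlinarith [sq_nonneg ‖b‖]

end dense2


section filt
open Filter Topology
set_option linter.unusedSectionVars false
variable {H : Type} [NormedAddCommGroup H] [InnerProductSpace ℂ H] [CompleteSpace H]

lemma aw_card (hsep : TopologicalSpace.SeparableSpace H) :
    Cardinal.mk ((H →L[ℂ] H) × ℕ) ≤ Cardinal.continuum := by
  obtain ⟨d, hd⟩ := TopologicalSpace.exists_dense_seq H
  have h1 : Cardinal.mk H ≤ Cardinal.continuum := by
    have hinj : Function.Injective (fun (x : H) (n : ℕ) => dist x (d n)) := by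
      intro x y hxy
      have : ∀ z, dist x z = dist y z := by
        refine fun z => hd.induction_on (p := fun z => dist x z = dist y z) z
          (isClosed_eq (by fun_prop) (by fun_prop)) (fun n => congrFun hxy n)
      have := this y
      rw [dist_self] at this
      exact dist_eq_zero.1 this
    refine (Cardinal.mk_le_of_injective hinj).trans ?_
    simp [Cardinal.mk_real]
  have h2 : Cardinal.mk (H →L[ℂ] H) ≤ Cardinal.continuum := by
    have hinj : Function.Injective (fun (a : H →L[ℂ] H) (n : ℕ) => a (d n)) := by
      intro a b hab
      ext x
      refine hd.induction_on (p := fun x => a x = b x) x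
          (isClosed_eq (by fun_prop) (by fun_prop)) (fun n => congrFun hab n)
    refine (Cardinal.mk_le_of_injective hinj).trans ?_
    calc Cardinal.mk (ℕ → H) = Cardinal.mk H ^ Cardinal.aleph0 := by simp
      _ ≤ Cardinal.continuum ^ Cardinal.aleph0 := Cardinal.power_le_power_right h1
      _ = Cardinal.continuum := Cardinal.continuum_power_aleph0
  rw [Cardinal.mk_prod, Cardinal.lift_id, Cardinal.lift_id, Cardinal.mk_nat]
  calc _ ≤ Cardinal.continuum * Cardinal.aleph0 := by gcongr
    _ = _ := Cardinal.continuum_mul_aleph0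

/-- Dense requirement attached to an operator. -/
def awReq (a : H →L[ℂ] H) (n : ℕ) (V : Submodule ℂ H) : Prop :=
  (∃ l : ℂ, ∀ w ∈ V, ‖inner ℂ w (a w) - l * (‖w‖ : ℂ) ^ 2‖ ≤ (1 / ((n : ℝ) + 1)) * ‖w‖ ^ 2) ∧
  (0 ≤ a → a ≤ 1 → (∀ x, a x = 0 → x = 0) →
    (∃ δ : ℝ, 0 < δ ∧ ∃ F : Submodule ℂ H, FiniteDimensional ℂ F ∧
      ∀ v ∈ V, v ∈ Fᗮ → ‖v‖ = 1 → δ ≤ awQ a v) ∨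
    (∃ S : H →L[ℂ] H, 0 ≤ S ∧ S ≤ 1 ∧ (∀ b, Commute b a → Commute b S) ∧
      ∀ w ∈ V, ‖w‖ = 1 → 1 / 4 ≤ awQ S w ∧ awQ S w ≤ 3 / 4 ∧ awQ S w - awQ (S * S) w ≤ 1 / 8))

lemma aw_dense {V : Submodule ℂ H} (hV : awBig V) (a : H →L[ℂ] H) (n : ℕ) :
    ∃ W ≤ V, awBig W ∧ awReq a n W := by
  obtain ⟨W, hWV, hW, l, hl⟩ := aw_dense1 hV a (ε := 1 / ((n : ℝ) + 1)) (by positivity)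
  by_cases hgood : 0 ≤ a ∧ a ≤ 1 ∧ (∀ x, a x = 0 → x = 0) ∧
      ∀ δ : ℝ, 0 < δ → ∀ F : Submodule ℂ H, FiniteDimensional ℂ F →
      ∃ v ∈ W, v ∈ Fᗮ ∧ ‖v‖ = 1 ∧ awQ a v < δ
  · obtain ⟨h0, h1, hinj, hB⟩ := hgood
    obtain ⟨W', hW'W, hW', S, hS0, hS1, hSc, hS⟩ := aw_dense2 hW (c := 1 - a)
      (sub_nonneg.2 h1) (sub_le_self _ h0) (fun x hx => hinj x (by simpa using hx))
      (by simpa using hB)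
    exact ⟨W', hW'W.trans hWV, hW', ⟨l, fun w hw => hl w (hW'W hw)⟩, fun _ _ _ =>
      Or.inr ⟨S, hS0, hS1, fun b hb => hSc b ((Commute.one_right b).sub_right hb), hS⟩⟩
  · refine ⟨W, hWV, hW, ⟨l, hl⟩, fun h0 h1 hinj => Or.inl ?_⟩
    by_contra hcon
    apply hgood
    refine ⟨h0, h1, hinj, fun δ hδ F hF => ?_⟩
    by_contra h2
    push Not at h2
    exact hcon ⟨δ, hδ, F, hF, h2⟩

lemma aw_filter (CH : Cardinal.continuum.{0} = Cardinal.aleph 1)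
    (hsep : TopologicalSpace.SeparableSpace H) (hinf : ¬FiniteDimensional ℂ H) :
    ∃ L : Filter H, L.NeBot ∧ (∀ᶠ v in L, ‖v‖ = 1) ∧
      (∀ x : H, ∀ᶠ v in L, inner ℂ x v = 0) ∧
      (∀ (a : H →L[ℂ] H) (ε : ℝ), 0 < ε → ∃ (l : ℂ) (W : Submodule ℂ H), IsClosed (W : Set H) ∧
        (∀ᶠ v in L, v ∈ W) ∧ ∀ w ∈ W, ‖inner ℂ w (a w) - l * (‖w‖ : ℂ) ^ 2‖ ≤ ε * ‖w‖ ^ 2) ∧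
      (∀ a : H →L[ℂ] H, 0 ≤ a → a ≤ 1 → (∀ x, a x = 0 → x = 0) →
        (∃ δ : ℝ, 0 < δ ∧ ∀ᶠ v in L, δ ≤ awQ a v) ∨
        (∃ S : H →L[ℂ] H, 0 ≤ S ∧ S ≤ 1 ∧ (∀ b, Commute b a → Commute b S) ∧
          ∀ᶠ w in L, 1 / 4 ≤ awQ S w ∧ awQ S w ≤ 3 / 4 ∧ awQ S w - awQ (S * S) w ≤ 1 / 8)) := by
  classical
  obtain ⟨p, hp, hc⟩ := aw_generic (P := {V : Submodule ℂ H // awBig V})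
    (ι := (H →L[ℂ] H) × ℕ) (fun x y => awLe x.1 y.1) (fun i V => awReq i.1 i.2 V.1)
    (fun x => awLe_refl x.1) ((aw_card hsep).trans CH.le) (by
      intro i C hC hch
      obtain ⟨W, hW, hWC⟩ := aw_chain hinf (Subtype.val '' C) (hC.image _)
        (by rintro _ ⟨x, _, rfl⟩; exact x.2)
        (by rintro _ ⟨x, hx, rfl⟩ _ ⟨y, hy, rfl⟩; exact hch x hx y hy)
      obtain ⟨W', hle, hW', hr⟩ := aw_dense hW i.1 i.2
      exact ⟨⟨W', hW'⟩, hr, fun y hy => awLe_trans (awLe_of_le hle) (hWC _ ⟨y, hy, rfl⟩)⟩)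
  let J := ((H →L[ℂ] H) × ℕ) × {F : Submodule ℂ H // FiniteDimensional ℂ F}
  let s : J → Set H := fun j => {v | ‖v‖ = 1 ∧ v ∈ (p j.1).1 ∧ v ∈ j.2.1ᗮ}
  have : Nonempty J := ⟨((0, 0), ⟨⊥, inferInstance⟩)⟩
  have hdir : Directed (· ≥ ·) (fun j => 𝓟 (s j)) := by
    rintro ⟨i, F, hF⟩ ⟨j, G, hG⟩
    have aux : ∀ i j, awLe (p i).1 (p j).1 → ∃ K : Submodule ℂ H, FiniteDimensional ℂ K ∧
        ∀ v, v ∈ (p i).1 → v ∈ Kᗮ → v ∈ (p j).1 := by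
      rintro i j ⟨K, hK, h⟩
      exact ⟨K, hK, fun v h1 h2 => h ⟨h1, h2⟩⟩
    rcases hc i j with h | h
    · obtain ⟨K, hK, h⟩ := aux _ _ h
      refine ⟨(i, ⟨F ⊔ G ⊔ K, inferInstance⟩), ?_, ?_⟩ <;>
      · simp only [ge_iff_le, le_principal_iff, mem_principal]
        rintro v ⟨h1, h2, h3⟩
        simp only [← Submodule.inf_orthogonal] at h3
        first
        | exact ⟨h1, h2, h3.1.1⟩
        | exact ⟨h1, h v h2 h3.2, h3.1.2⟩
    · obtain ⟨K, hK, h⟩ := aux _ _ h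
      refine ⟨(j, ⟨F ⊔ G ⊔ K, inferInstance⟩), ?_, ?_⟩ <;>
      · simp only [ge_iff_le, le_principal_iff, mem_principal]
        rintro v ⟨h1, h2, h3⟩
        simp only [← Submodule.inf_orthogonal] at h3
        first
        | exact ⟨h1, h2, h3.1.2⟩
        | exact ⟨h1, h v h2 h3.2, h3.1.1⟩
  have hmem : ∀ j, ∀ᶠ v in ⨅ j, 𝓟 (s j), v ∈ s j := fun j =>
    mem_iInf_of_mem j (mem_principal_self _)
  have hb : FiniteDimensional ℂ (⊥ : Submodule ℂ H) := inferInstance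
  refine ⟨⨅ j, 𝓟 (s j), ?_, ?_, ?_, ?_, ?_⟩
  · refine iInf_neBot_of_directed hdir fun j => ?_
    rw [principal_neBot_iff]
    have := j.2.2
    obtain ⟨v, h1, h2, h3⟩ := aw_exists_unit (F := j.2.1) (p j.1).2.2
    exact ⟨v, h3, h1, h2⟩
  · exact (hmem ((0, 0), ⟨⊥, hb⟩)).mono fun v hv => hv.1
  · intro x
    exact (hmem ((0, 0), ⟨Submodule.span ℂ {x}, inferInstance⟩)).mono fun v hv =>
      aw_mem_perp_span hv.2.2 rfl
  · intro a ε hε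
    obtain ⟨n, hn⟩ := exists_nat_one_div_lt hε
    obtain ⟨l, hl⟩ := (hp (a, n)).1
    refine ⟨l, (p (a, n)).1, (p (a, n)).2.1,
      (hmem ((a, n), ⟨⊥, hb⟩)).mono fun v hv => hv.2.1, fun w hw => (hl w hw).trans ?_⟩
    exact mul_le_mul_of_nonneg_right hn.le (by positivity)
  · intro a h0 h1 hinj
    rcases (hp (a, 0)).2 h0 h1 hinj with ⟨δ, hδ, F, hF, h⟩ | ⟨S, hS0, hS1, hSc, hS⟩
    · exact Or.inl ⟨δ, hδ, (hmem ((a, 0), ⟨F, hF⟩)).mono fun v hv => h v hv.2.1 hv.2.2 hv.1⟩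
    · exact Or.inr ⟨S, hS0, hS1, hSc, (hmem ((a, 0), ⟨⊥, hb⟩)).mono fun v hv =>
        hS v hv.2.1 hv.1⟩

end filt


section final
set_option linter.unusedSectionVars false
set_option linter.unusedSimpArgs false
set_option linter.deprecated false
open Filter Topology
variable {H : Type} [NormedAddCommGroup H] [InnerProductSpace ℂ H] [CompleteSpace H]

lemma aw_limfun {L : Filter H} [L.NeBot] (h1 : ∀ᶠ v in L, ‖v‖ = 1)
    (hL : ∀ (a : H →L[ℂ] H) (ε : ℝ), 0 < ε → ∃ (l : ℂ) (W : Submodule ℂ H), IsClosed (W : Set H) ∧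
        (∀ᶠ v in L, v ∈ W) ∧ ∀ w ∈ W, ‖inner ℂ w (a w) - l * (‖w‖ : ℂ) ^ 2‖ ≤ ε * ‖w‖ ^ 2) :
    ∃ φ : (H →L[ℂ] H) →ₗ[ℂ] ℂ, ∀ a : H →L[ℂ] H,
      Tendsto (fun v => inner ℂ v (a v)) L (𝓝 (φ a)) := by
  have hex : ∀ a : H →L[ℂ] H, ∃ l, Tendsto (fun v => inner ℂ v (a v)) L (𝓝 l) := by
    intro a
    have hc : Cauchy (Filter.map (fun v => (inner ℂ v (a v) : ℂ)) L) := by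
      rw [Metric.cauchy_iff]
      refine ⟨inferInstance, fun ε hε => ?_⟩
      obtain ⟨l, W, -, hW, hl⟩ := hL a (ε / 3) (by positivity)
      refine ⟨Metric.closedBall l (ε / 3), ?_, ?_⟩
      · rw [Filter.mem_map]
        filter_upwards [h1, hW] with v hv hvW
        have := hl v hvW
        rw [hv] at this
        simpa [dist_eq_norm] using this
      · intro x hx y hy
        have := dist_triangle_right x y l
        rw [Metric.mem_closedBall] at hx hy
        linarith
    obtain ⟨l, hl⟩ := CompleteSpace.complete hc
    exact ⟨l, hl⟩
  choose f hf using hex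
  refine ⟨⟨⟨f, fun a b => ?_⟩, fun c a => ?_⟩, hf⟩
  · refine tendsto_nhds_unique (hf (a + b)) ?_
    simpa [inner_add_right] using (hf a).add (hf b)
  · refine tendsto_nhds_unique (hf (c • a)) ?_
    simpa [inner_smul_right] using (hf a).const_mul c

lemma aw_lim_state {L : Filter H} [L.NeBot] (h1 : ∀ᶠ v in L, ‖v‖ = 1)
    {φ : (H →L[ℂ] H) →ₗ[ℂ] ℂ} (hφ : ∀ a : H →L[ℂ] H,
      Tendsto (fun v => inner ℂ v (a v)) L (𝓝 (φ a))) :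
    IsState φ ∧ ∀ a, ‖φ a‖ ≤ ‖a‖ := by
  have hone : φ 1 = 1 := by
    refine tendsto_nhds_unique (hφ 1) (tendsto_const_nhds.congr' ?_)
    filter_upwards [h1] with v hv
    rw [ContinuousLinearMap.one_apply, inner_self_eq_norm_sq_to_K, hv]; simp
  refine ⟨⟨fun a => ?_, hone⟩, fun a => ?_⟩
  · have e : ∀ v, (inner ℂ v ((star a * a) v) : ℂ) = ((‖a v‖ ^ 2 : ℝ) : ℂ) := by
      intro v
      rw [ContinuousLinearMap.mul_apply, ContinuousLinearMap.star_eq_adjoint,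
        ContinuousLinearMap.adjoint_inner_right, inner_self_eq_norm_sq_to_K]
      push_cast; rfl
    have h := hφ (star a * a)
    simp only [e] at h
    constructor
    · refine ge_of_tendsto (Complex.continuous_re.continuousAt.tendsto.comp h)
        (Eventually.of_forall fun v => ?_)
      simp only [Function.comp_apply, Complex.ofReal_re]; positivity
    · refine tendsto_nhds_unique (Complex.continuous_im.continuousAt.tendsto.comp h) ?_
      refine tendsto_const_nhds.congr fun v => ?_
      simp only [Function.comp_apply, Complex.ofReal_im]
  · refine le_of_tendsto (hφ a).norm ?_
    filter_upwards [h1] with v hv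
    calc ‖(inner ℂ v (a v) : ℂ)‖ ≤ ‖v‖ * ‖a v‖ := norm_inner_le_norm _ _
      _ ≤ ‖v‖ * (‖a‖ * ‖v‖) := by gcongr; exact a.le_opNorm v
      _ = ‖a‖ := by rw [hv]; ring

lemma aw_sqrt_star {c : H →L[ℂ] H} (h : 0 ≤ c) : c = star (CFC.sqrt c) * CFC.sqrt c := by
  rw [(aw_sa (CFC.sqrt_nonneg c)).star_eq, CFC.sqrt_mul_sqrt_self c h]

lemma aw_state_nonneg {ψ : (H →L[ℂ] H) →ₗ[ℂ] ℂ} (hψ : IsState ψ) {c : H →L[ℂ] H} (h : 0 ≤ c) :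
    0 ≤ (ψ c).re ∧ (ψ c).im = 0 := by
  rw [aw_sqrt_star h]; exact hψ.1 _

lemma awQ_le (a : H →L[ℂ] H) (x : H) : |awQ a x| ≤ ‖a‖ * ‖x‖ ^ 2 := by
  calc |awQ a x| ≤ ‖(inner ℂ x (a x) : ℂ)‖ := Complex.abs_re_le_norm _
    _ ≤ ‖x‖ * ‖a x‖ := norm_inner_le_norm _ _
    _ ≤ ‖x‖ * (‖a‖ * ‖x‖) := by gcongr; exact a.le_opNorm x
    _ = _ := by ring

lemma awQ_smul (r : ℝ) (a : H →L[ℂ] H) (x : H) : awQ ((r : ℂ) • a) x = r * awQ a x := by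
  simp [awQ, inner_smul_right]

lemma aw_sa_smul (r : ℝ) {a : H →L[ℂ] H} (h : IsSelfAdjoint a) : IsSelfAdjoint ((r : ℂ) • a) := by
  rw [IsSelfAdjoint, star_smul, h.star_eq]; simp

lemma aw_sa_one : IsSelfAdjoint (1 : H →L[ℂ] H) := IsSelfAdjoint.one _

lemma aw_add_nonneg {a : H →L[ℂ] H} (h : IsSelfAdjoint a) {r : ℝ} (hr : ‖a‖ ≤ r) :
    0 ≤ (r : ℂ) • (1 : H →L[ℂ] H) + a := by
  refine aw_nonneg_of ((aw_sa_smul r aw_sa_one).add h) fun x => ?_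
  rw [awQ_add, awQ_smul, awQ_one]
  have := abs_le.1 (awQ_le a x)
  nlinarith [sq_nonneg ‖x‖]

lemma aw_state_real {ψ : (H →L[ℂ] H) →ₗ[ℂ] ℂ} (hψ : IsState ψ) {a : H →L[ℂ] H}
    (h : IsSelfAdjoint a) : (ψ a).im = 0 := by
  have := (aw_state_nonneg hψ (aw_add_nonneg h le_rfl)).2
  simpa [hψ.2] using this

lemma aw_decomp (a : H →L[ℂ] H) : ∃ b c : H →L[ℂ] H, IsSelfAdjoint b ∧ IsSelfAdjoint c ∧
    a = b + Complex.I • c ∧ b = (1 / 2 : ℂ) • (a + star a) ∧ 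
    c = (-Complex.I / 2 : ℂ) • (a - star a) := by
  refine ⟨_, _, ?_, ?_, ?_, rfl, rfl⟩
  · rw [IsSelfAdjoint, star_smul, star_add, star_star, add_comm]; simp
  · rw [IsSelfAdjoint, star_smul, star_sub, star_star]
    rw [← neg_sub a (star a), smul_neg, ← neg_smul]
    congr 1; simp; ring
  · rw [smul_smul]
    have : Complex.I * (-Complex.I / 2) = 1 / 2 := by
      rw [← mul_div_assoc, mul_neg, Complex.I_mul_I]; simp
    rw [this, ← smul_add]
    have : a + star a + (a - star a) = (2 : ℂ) • a := by rw [two_smul]; abel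
    rw [this, smul_smul]; norm_num

lemma aw_pure {L : Filter H} [L.NeBot] (h1 : ∀ᶠ v in L, ‖v‖ = 1)
    (hL : ∀ (a : H →L[ℂ] H) (ε : ℝ), 0 < ε → ∃ (l : ℂ) (W : Submodule ℂ H), IsClosed (W : Set H) ∧
        (∀ᶠ v in L, v ∈ W) ∧ ∀ w ∈ W, ‖inner ℂ w (a w) - l * (‖w‖ : ℂ) ^ 2‖ ≤ ε * ‖w‖ ^ 2)
    {φ : (H →L[ℂ] H) →ₗ[ℂ] ℂ} (hφ : ∀ a : H →L[ℂ] H,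
      Tendsto (fun v => inner ℂ v (a v)) L (𝓝 (φ a))) : IsPureState φ := by
  have hst := (aw_lim_state h1 hφ).1
  -- key : any state that is 1 on all projections where φ is 1
  have key : ∀ ψ : (H →L[ℂ] H) →ₗ[ℂ] ℂ, IsState ψ →
      (∀ q : H →L[ℂ] H, φ (star q * q) = 0 → ψ (star q * q) = 0) → ψ = φ := by
    intro ψ hψ hq
    have le : ∀ a : H →L[ℂ] H, IsSelfAdjoint a → (ψ a).re ≤ (φ a).re := by
      intro a ha
      refine le_of_forall_pos_le_add fun ε hε => ?_
      obtain ⟨l, W, hWc, hW, hl⟩ := hL a (ε / 2) (by positivity)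
      have : CompleteSpace W := hWc.completeSpace_coe
      set p := W.starProjection with hp
      have hpsa : IsSelfAdjoint p := isSelfAdjoint_starProjection W
      have hpW : ∀ v ∈ W, p v = v := fun v hv => Submodule.starProjection_eq_self_iff.2 hv
      have hpm : ∀ v, p v ∈ W := fun v => Submodule.starProjection_apply_mem W v
      have hpp : p * p = p := by
        ext v; exact hpW _ (hpm v)
      have hφl : l.re ≤ (φ a).re + ε / 2 := by
        have ht := Complex.continuous_re.continuousAt.tendsto.comp (hφ a)
        have : l.re - ε / 2 ≤ (φ a).re := by
          refine ge_of_tendsto ht ?_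
          filter_upwards [h1, hW] with v hv hvW
          have := hl v hvW
          rw [hv] at this
          have := (Complex.abs_re_le_norm _).trans this
          simp only [Complex.ofReal_one, one_pow, mul_one, Complex.sub_re] at this
          have := (abs_le.1 this).1
          simp only [Function.comp_apply]; linarith
        linarith
      have hsq : star (1 - p) * (1 - p) = 1 - p := by
        rw [star_sub, star_one, hpsa.star_eq, mul_sub, sub_mul, sub_mul, hpp]; simp
      have hφq : φ (star (1 - p) * (1 - p)) = 0 := by
        rw [hsq]
        refine tendsto_nhds_unique (hφ (1 - p)) (tendsto_const_nhds.congr' ?_)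
        filter_upwards [hW] with v hv
        simp [hpW v hv]
      have hψq := hq _ hφq
      have hψp : ψ p = 1 := by
        rw [hsq, map_sub, hψ.2, sub_eq_zero] at hψq
        exact hψq.symm
      have e1 : ψ a = ψ (p * a * p) := by
        have h1 := (aw_state_cs hψ hψq a).2
        have h2 := (aw_state_cs hψ hψq (star (p * a))).1
        rw [star_sub, star_one, hpsa.star_eq, sub_mul, one_mul, map_sub, sub_eq_zero] at h1
        rw [star_star, mul_sub, mul_one, map_sub, sub_eq_zero] at h2
        rw [h1, h2]
      have hpos : 0 ≤ ((l.re + ε / 2 : ℝ) : ℂ) • p - p * a * p := by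
        refine aw_nonneg_of ((aw_sa_smul _ hpsa).sub ?_) fun x => ?_
        · rw [IsSelfAdjoint, star_mul, star_mul, hpsa.star_eq, ha.star_eq, mul_assoc]
        · rw [awQ_sub, awQ_smul]
          have ep : awQ p x = ‖p x‖ ^ 2 := by
            rw [← hpp, awQ, ContinuousLinearMap.mul_apply, ← aw_sa_inner hpsa, 
              hpW _ (hpm x)]
            exact inner_self_eq_norm_sq (𝕜 := ℂ) (p x)
          have ea : awQ (p * a * p) x = awQ a (p x) := by
            rw [awQ, ContinuousLinearMap.mul_apply, ContinuousLinearMap.mul_apply,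
              ← aw_sa_inner hpsa, awQ]
          rw [ep, ea]
          have := (Complex.abs_re_le_norm _).trans (hl (p x) (hpm x))
          have e : (l * (‖p x‖ : ℂ) ^ 2).re = l.re * ‖p x‖ ^ 2 := by
            rw [← Complex.ofReal_pow, Complex.re_mul_ofReal]
          rw [Complex.sub_re, e] at this
          have := (abs_le.1 this).2
          rw [awQ]; linarith
      have := (aw_state_nonneg hψ hpos).1
      rw [map_sub, map_smul, hψp, ← e1] at this
      simp only [smul_eq_mul, mul_one, Complex.sub_re, Complex.ofReal_re] at this
      linarith
    have eq : ∀ a : H →L[ℂ] H, IsSelfAdjoint a → ψ a = φ a := by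
      intro a ha
      have h2 := le (-a) ha.neg
      simp only [map_neg, Complex.neg_re] at h2
      refine Complex.ext (le_antisymm (le a ha) (by linarith)) ?_
      rw [aw_state_real hψ ha, aw_state_real hst ha]
    ext a
    obtain ⟨b, c, hb, hc, e, -, -⟩ := aw_decomp a
    rw [e, map_add, map_add, map_smul, map_smul, eq b hb, eq c hc]
  refine ⟨hst, fun ψ₁ ψ₂ t hψ₁ hψ₂ ht0 ht1 he => ?_⟩
  have aux : ∀ q : H →L[ℂ] H, φ (star q * q) = 0 →
      ψ₁ (star q * q) = 0 ∧ ψ₂ (star q * q) = 0 := by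
    intro q hq
    have a1 := hψ₁.1 q
    have a2 := hψ₂.1 q
    have := congrArg Complex.re hq
    rw [he] at this
    simp only [LinearMap.add_apply, LinearMap.smul_apply, smul_eq_mul, Complex.add_re,
      Complex.re_ofReal_mul, Complex.zero_re] at this
    have b1 := mul_nonneg ht0.le a1.1
    have b2 := mul_nonneg (sub_pos.2 ht1).le a2.1
    have c1 : t * (ψ₁ (star q * q)).re = 0 := by linarith
    have c2 : (1 - t) * (ψ₂ (star q * q)).re = 0 := by linarith
    exact ⟨Complex.ext ((mul_eq_zero.1 c1).resolve_left ht0.ne') a1.2,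
      Complex.ext ((mul_eq_zero.1 c2).resolve_left (sub_pos.2 ht1).ne') a2.2⟩
  rw [key ψ₁ hψ₁ fun q hq => (aux q hq).1, key ψ₂ hψ₂ fun q hq => (aux q hq).2]

end final


section masa
set_option linter.unusedSectionVars false
set_option linter.unusedSimpArgs false
set_option linter.deprecated false
open Filter Topology
variable {H : Type} [NormedAddCommGroup H] [InnerProductSpace ℂ H] [CompleteSpace H]

lemma aw_masa_mem {A : StarSubalgebra ℂ (H →L[ℂ] H)}
    (comm : ∀ a ∈ A, ∀ b ∈ A, a * b = b * a)
    (hmax : ∀ B : StarSubalgebra ℂ (H →L[ℂ] H),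
          (∀ a ∈ B, ∀ b ∈ B, a * b = b * a) → A ≤ B → B = A)
    {x : H →L[ℂ] H} (hx : IsSelfAdjoint x) (hc : ∀ a ∈ A, x * a = a * x) : x ∈ A := by
  have hcm := StarAlgebra.isMulCommutative_adjoin ℂ (s := (A : Set (H →L[ℂ] H)) ∪ {x}) (by
    rintro a (ha | rfl) b (hb | rfl)
    · exact comm a ha b hb
    · exact (hc a ha).symm
    · exact hc b hb
    · rfl) (by
    rintro a (ha | rfl) b (hb | rfl)
    · exact comm a ha _ (star_mem hb)
    · rw [hx.star_eq]; exact (hc a ha).symm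
    · exact hc _ (star_mem hb)
    · rw [hx.star_eq])
  have hB := hmax (StarAlgebra.adjoin ℂ ((A : Set (H →L[ℂ] H)) ∪ {x})) (by
    intro a ha b hb
    have := hcm.is_comm.comm ⟨a, ha⟩ ⟨b, hb⟩
    exact congrArg Subtype.val this)
    (fun a ha => StarAlgebra.subset_adjoin ℂ _ (Or.inl ha))
  rw [← hB]
  exact StarAlgebra.subset_adjoin ℂ _ (Or.inr rfl)

lemma aw_masa_mem_sa {A : StarSubalgebra ℂ (H →L[ℂ] H)}
    (comm : ∀ a ∈ A, ∀ b ∈ A, a * b = b * a)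
    (hmax : ∀ B : StarSubalgebra ℂ (H →L[ℂ] H),
          (∀ a ∈ B, ∀ b ∈ B, a * b = b * a) → A ≤ B → B = A)
    {x : H →L[ℂ] H} (hx : IsSelfAdjoint x)
    (hc : ∀ a ∈ A, IsSelfAdjoint a → x * a = a * x) : x ∈ A := by
  refine aw_masa_mem comm hmax hx fun a ha => ?_
  obtain ⟨b, c, hb, hc', e, eb, ec⟩ := aw_decomp a
  have hbA : b ∈ A := by
    rw [eb]; exact A.smul_mem (add_mem ha (star_mem ha)) _
  have hcA : c ∈ A := by
    rw [ec]; exact A.smul_mem (sub_mem ha (star_mem ha)) _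
  rw [e, mul_add, add_mul, mul_smul_comm, smul_mul_assoc, hc b hbA hb, hc c hcA hc']

lemma aw_masa_mult {A : StarSubalgebra ℂ (H →L[ℂ] H)}
    (comm : ∀ a ∈ A, ∀ b ∈ A, a * b = b * a)
    (hmax : ∀ B : StarSubalgebra ℂ (H →L[ℂ] H),
          (∀ a ∈ B, ∀ b ∈ B, a * b = b * a) → A ≤ B → B = A)
    {φ : (H →L[ℂ] H) →ₗ[ℂ] ℂ} (hφ : IsPureState (φ.comp A.subtype.toLinearMap))
    {b : H →L[ℂ] H} (hb : IsSelfAdjoint b) (hbA : b ∈ A) {a : H →L[ℂ] H} (ha : a ∈ A) :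
    φ (b * a) = φ b * φ a := by
  have hsq : ∀ c ∈ A, 0 ≤ c → CFC.sqrt c ∈ A := by
    intro c hc h0
    refine aw_masa_mem comm hmax (aw_sa (CFC.sqrt_nonneg c)) fun d hd => ?_
    have : Commute c d := comm c hc d hd
    exact this.cfcₙ_nnreal _
  have hone : φ 1 = 1 := hφ.1.2
  have pos : ∀ c ∈ A, 0 ≤ c → 0 ≤ 1 - c → φ (c * a) = φ c * φ a := by
    intro c hc h0 h1
    have hc1 : 1 - c ∈ A := sub_mem (one_mem A) hc
    exact aw_pure_mult hφ (fun a b => Subtype.ext (comm a a.2 b b.2)) (c := ⟨c, hc⟩)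
      (x := ⟨_, hsq c hc h0⟩) (y := ⟨_, hsq _ hc1 h1⟩) (Subtype.ext (aw_sqrt_star h0))
      (Subtype.ext (aw_sqrt_star h1)) ⟨a, ha⟩
  set r : ℝ := ‖b‖ + 1 with hr
  have hr0 : 0 < r := by positivity
  set c : H →L[ℂ] H := ((1 / (2 * r) : ℝ) : ℂ) • ((r : ℂ) • (1 : H →L[ℂ] H) + b) with hc
  have hcA : c ∈ A := A.smul_mem (add_mem (A.smul_mem (one_mem A) _) hbA) _
  have hq : ∀ x, awQ c x = 1 / (2 * r) * (r * ‖x‖ ^ 2 + awQ b x) := by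
    intro x; rw [hc, awQ_smul, awQ_add, awQ_smul, awQ_one]
  have hcsa : IsSelfAdjoint c := aw_sa_smul _ ((aw_sa_smul r aw_sa_one).add hb)
  have hbd : ∀ x, |awQ b x| ≤ r * ‖x‖ ^ 2 := fun x =>
    (awQ_le b x).trans (by gcongr; linarith)
  have h0 : 0 ≤ c := aw_nonneg_of hcsa fun x => by
    rw [hq]
    have := (abs_le.1 (hbd x)).1
    exact mul_nonneg (by positivity) (by linarith)
  have h1 : 0 ≤ 1 - c := aw_nonneg_of (aw_sa_one.sub hcsa) fun x => by
    rw [awQ_sub, awQ_one, hq]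
    have := (abs_le.1 (hbd x)).2
    have e : ‖x‖ ^ 2 = 1 / (2 * r) * (2 * r * ‖x‖ ^ 2) := by field_simp
    have : 1 / (2 * r) * (r * ‖x‖ ^ 2 + awQ b x) ≤ 1 / (2 * r) * (2 * r * ‖x‖ ^ 2) := by
      gcongr; linarith
    linarith
  have := pos c hcA h0 h1
  have hr1 : ((1 / (2 * r) : ℝ) : ℂ) ≠ 0 := by
    have : (1 / (2 * r) : ℝ) ≠ 0 := by positivity
    exact_mod_cast this
  rw [hc] at this
  simp only [smul_mul_assoc, map_smul, add_mul, one_mul, map_add, hone, smul_eq_mul, mul_one,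
    mul_assoc] at this
  have := mul_left_cancel₀ hr1 this
  linear_combination this

lemma aw_masa_false (hsep : TopologicalSpace.SeparableSpace H)
    {L : Filter H} [L.NeBot] (h1 : ∀ᶠ v in L, ‖v‖ = 1)
    (hL2 : ∀ x : H, ∀ᶠ v in L, inner ℂ x v = 0)
    (hL : ∀ a : H →L[ℂ] H, 0 ≤ a → a ≤ 1 → (∀ x, a x = 0 → x = 0) →
        (∃ δ : ℝ, 0 < δ ∧ ∀ᶠ v in L, δ ≤ awQ a v) ∨
        (∃ S : H →L[ℂ] H, 0 ≤ S ∧ S ≤ 1 ∧ (∀ b, Commute b a → Commute b S) ∧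
          ∀ᶠ w in L, 1 / 4 ≤ awQ S w ∧ awQ S w ≤ 3 / 4 ∧ awQ S w - awQ (S * S) w ≤ 1 / 8))
    {φ : (H →L[ℂ] H) →ₗ[ℂ] ℂ} (hφ : ∀ a : H →L[ℂ] H,
      Tendsto (fun v => inner ℂ v (a v)) L (𝓝 (φ a)))
    {A : StarSubalgebra ℂ (H →L[ℂ] H)}
    (comm : ∀ a ∈ A, ∀ b ∈ A, a * b = b * a)
    (hmax : ∀ B : StarSubalgebra ℂ (H →L[ℂ] H),
          (∀ a ∈ B, ∀ b ∈ B, a * b = b * a) → A ≤ B → B = A)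
    (hpure : IsPureState (φ.comp A.subtype.toLinearMap)) : False := by
  obtain ⟨hst, hnorm⟩ := aw_lim_state h1 hφ
  have hmul := fun {b} hb hbA {a} ha => aw_masa_mult comm hmax hpure (b := b) hb hbA (a := a) ha
  have hQ : ∀ a : H →L[ℂ] H, Tendsto (fun v => awQ a v) L (𝓝 (φ a).re) := fun a =>
    Complex.continuous_re.continuousAt.tendsto.comp (hφ a)
  let I := {a : H →L[ℂ] H // a ∈ A ∧ IsSelfAdjoint a ∧ φ a = 0}
  have hker : ∀ x : H, (∀ a : I, a.1 x = 0) → x = 0 := by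
    intro x hx
    have hbx : ∀ b ∈ A, IsSelfAdjoint b → b x = φ b • x := by
      intro b hbA hb
      have e : φ b = ((φ b).re : ℂ) := Complex.ext (by simp) (by simp [aw_state_real hst hb])
      have := hx ⟨b - ((φ b).re : ℂ) • 1, sub_mem hbA (A.smul_mem (one_mem A) _),
        hb.sub (aw_sa_smul _ aw_sa_one), by
          rw [map_sub, map_smul, hst.2, ← e]; simp⟩
      change (b - ((φ b).re : ℂ) • (1 : H →L[ℂ] H)) x = 0 at this
      rw [← e] at this
      simpa [sub_eq_zero] using this
    set θ : H →L[ℂ] H := InnerProductSpace.rankOne ℂ x x with hθ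
    have hθsa : IsSelfAdjoint θ := by
      rw [ContinuousLinearMap.isSelfAdjoint_iff_isSymmetric]
      intro y z
      simp [hθ, inner_smul_left, inner_smul_right, mul_comm]
    have hθA : θ ∈ A := aw_masa_mem_sa comm hmax hθsa fun b hbA hb => by
      have e : (starRingEnd ℂ) (φ b) = φ b := Complex.conj_eq_iff_im.2 (aw_state_real hst hb)
      ext y
      simp only [hθ, ContinuousLinearMap.mul_apply, InnerProductSpace.rankOne_apply, map_smul,
        hbx b hbA hb]
      rw [← aw_sa_inner hb, hbx b hbA hb, inner_smul_left, e, smul_smul, mul_comm]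
    have hφθ : φ θ = 0 := by
      refine tendsto_nhds_unique (hφ θ) (tendsto_const_nhds.congr' ?_)
      filter_upwards [hL2 x] with v hv
      simp [hθ, hv]
    have := hx ⟨θ, hθA, hθsa, hφθ⟩
    simpa [hθ] using this
  have : SecondCountableTopology H := UniformSpace.secondCountable_of_separable H
  obtain ⟨T, hTc, hT⟩ := TopologicalSpace.isOpen_iUnion_countable
    (fun a : I => {x : H | a.1 x ≠ 0}) (fun a => isOpen_ne_fun a.1.continuous continuous_const)
  have hkT : ∀ x : H, (∀ a ∈ T, a.1 x = 0) → x = 0 := by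
    intro x hx
    refine hker x fun a => ?_
    by_contra hne
    have : x ∈ ⋃ a : I, {x : H | a.1 x ≠ 0} := Set.mem_iUnion.2 ⟨a, hne⟩
    rw [← hT] at this
    simp only [Set.mem_iUnion] at this
    obtain ⟨b, hb, h⟩ := this
    exact h (hx b hb)
  let i0 : I := ⟨0, zero_mem A, IsSelfAdjoint.zero _, map_zero φ⟩
  obtain ⟨f, hf⟩ := (hTc.insert i0).exists_eq_range (Set.insert_nonempty _ _)
  have hkf : ∀ x : H, (∀ n, (f n).1 x = 0) → x = 0 := by
    intro x hx
    refine hkT x fun a ha => ?_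
    have : a ∈ Set.range f := hf ▸ Set.mem_insert_of_mem _ ha
    obtain ⟨n, rfl⟩ := this
    exact hx n
  -- the series
  let k : ℕ → ℝ := fun n => (1 / 2) ^ (n + 1) / (‖(f n).1‖ ^ 2 + 1)
  have hk0 : ∀ n, 0 < k n := fun n => by positivity
  let g : ℕ → H →L[ℂ] H := fun n => (k n : ℂ) • ((f n).1 * (f n).1)
  have hgn : ∀ n, ‖g n‖ ≤ (1 / 2) ^ (n + 1) := by
    intro n
    calc ‖g n‖ = k n * ‖(f n).1 * (f n).1‖ := by
          simp only [g]; rw [norm_smul, Complex.norm_real, Real.norm_of_nonneg (hk0 n).le]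
      _ ≤ k n * (‖(f n).1‖ ^ 2 + 1) := by
          gcongr
          have := norm_mul_le (f n).1 (f n).1
          nlinarith
      _ = _ := by simp only [k]; field_simp
  have hgeo : HasSum (fun n : ℕ => ((1 : ℝ) / 2) ^ (n + 1)) 1 := by
    have := (hasSum_geometric_two).mul_right (1 / 2 : ℝ)
    simpa [pow_succ] using this
  have hgs : Summable g := Summable.of_norm_bounded hgeo.summable hgn
  set h : H →L[ℂ] H := ∑' n, g n with hh
  have hsum : HasSum g h := hgs.hasSum
  have hgsa : ∀ n, IsSelfAdjoint (g n) := fun n => by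
    refine aw_sa_smul _ ?_
    rw [IsSelfAdjoint, star_mul, (f n).2.2.1.star_eq]
  have hgA : ∀ n, g n ∈ A := fun n => A.smul_mem (mul_mem (f n).2.1 (f n).2.1) _
  have hgQ : ∀ n x, awQ (g n) x = k n * ‖(f n).1 x‖ ^ 2 := by
    intro n x
    simp only [g]
    rw [awQ_smul, awQ, ContinuousLinearMap.mul_apply, ← aw_sa_inner (f n).2.2.1]
    congr 1
    exact inner_self_eq_norm_sq (𝕜 := ℂ) _
  have hhsa : IsSelfAdjoint h := by
    have := hsum.star
    simp only [(hgsa _).star_eq] at this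
    exact this.unique hsum
  have hhcomm : ∀ b ∈ A, h * b = b * h := by
    intro b hb
    have e1 := hsum.mul_right b
    have e2 := hsum.mul_left b
    simp only [comm _ (hgA _) b hb] at e1
    exact e1.unique e2
  have hhA : h ∈ A := aw_masa_mem comm hmax hhsa hhcomm
  have hhQ : ∀ x, HasSum (fun n => awQ (g n) x) (awQ h x) := by
    intro x
    let Λ : (H →L[ℂ] H) →L[ℂ] ℂ := (innerSL ℂ x).comp (ContinuousLinearMap.apply ℂ H x)
    have := Complex.hasSum_re (Λ.hasSum hsum)
    exact this
  have hφh : φ h = 0 := by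
    let Φ : (H →L[ℂ] H) →L[ℂ] ℂ := φ.mkContinuous 1 (by simpa using hnorm)
    have e := Φ.hasSum hsum
    have e0 : ∀ n, Φ (g n) = 0 := by
      intro n
      change φ ((k n : ℂ) • ((f n).1 * (f n).1)) = 0
      rw [map_smul, hmul (f n).2.2.1 (f n).2.1 (f n).2.1, (f n).2.2.2]; simp
    simp only [e0] at e
    exact e.unique hasSum_zero
  have hh0 : 0 ≤ h := aw_nonneg_of hhsa fun x => (hhQ x).nonneg fun n => by
    rw [hgQ]; have := hk0 n; positivity
  have hh1 : h ≤ 1 := by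
    rw [← sub_nonneg]
    refine aw_nonneg_of (aw_sa_one.sub hhsa) fun x => ?_
    rw [awQ_sub, awQ_one, sub_nonneg]
    have := hasSum_le (fun n => ?_) (hhQ x) (hgeo.mul_right (‖x‖ ^ 2))
    · simpa using this
    · exact (le_abs_self _).trans ((awQ_le _ _).trans (by gcongr; exact hgn n))
  have hinj : ∀ x, h x = 0 → x = 0 := by
    intro x hx
    have e : awQ h x = 0 := by simp [awQ, hx]
    have hs := hhQ x
    rw [e] at hs
    have hz := (hasSum_zero_iff_of_nonneg (fun n => by
      change 0 ≤ awQ (g n) x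
      rw [hgQ]; have := hk0 n; positivity)).1 hs
    refine hkf x fun n => ?_
    have := congrFun hz n
    simp only [hgQ, Pi.zero_apply] at this
    have := (mul_eq_zero.1 this).resolve_left (hk0 n).ne'
    exact norm_eq_zero.1 (pow_eq_zero_iff (two_ne_zero) |>.1 this)
  rcases hL h hh0 hh1 hinj with ⟨δ, hδ, hev⟩ | ⟨S, hS0, hS1, hSc, hev⟩
  · have := ge_of_tendsto (hQ h) hev
    rw [hφh] at this
    simp only [Complex.zero_re] at this
    linarith
  · have hSA : S ∈ A := aw_masa_mem comm hmax (aw_sa hS0) fun b hb =>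
      (hSc b (hhcomm b hb).symm).symm
    have hm := hmul (aw_sa hS0) hSA hSA
    have him := aw_state_real hst (aw_sa hS0)
    have e2 : (φ (S * S)).re = (φ S).re * (φ S).re := by
      rw [hm, Complex.mul_re, him]; ring
    have b1 := ge_of_tendsto (hQ S) (hev.mono fun _ h => h.1)
    have b2 := le_of_tendsto (hQ S) (hev.mono fun _ h => h.2.1)
    have b3 := le_of_tendsto ((hQ S).sub (hQ (S * S))) (hev.mono fun _ h => h.2.2)
    rw [e2] at b3
    nlinarith

end masa

/-- Akemann–Weaver: assuming the Continuum Hypothesis, `B(H)` for an infinite-dimensional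
separable complex Hilbert space `H` has a pure state whose restriction to every maximal
abelian self-adjoint subalgebra is not pure. -/
theorem exists_pure_state_not_pure_on_any_masa
    (CH : Cardinal.continuum = Cardinal.aleph 1)
    (H : Type) [NormedAddCommGroup H] [InnerProductSpace ℂ H] [CompleteSpace H]
    (hsep : TopologicalSpace.SeparableSpace H) (hinf : ¬FiniteDimensional ℂ H) :
    ∃ φ : (H →L[ℂ] H) →ₗ[ℂ] ℂ, IsPureState φ ∧
      ∀ A : StarSubalgebra ℂ (H →L[ℂ] H),
        (∀ a ∈ A, ∀ b ∈ A, a * b = b * a) →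
        (∀ B : StarSubalgebra ℂ (H →L[ℂ] H),
          (∀ a ∈ B, ∀ b ∈ B, a * b = b * a) → A ≤ B → B = A) →
        ¬IsPureState (φ.comp A.subtype.toLinearMap) := by
  have CH0 : Cardinal.continuum.{0} = Cardinal.aleph 1 := by
    apply Cardinal.lift_injective
    simpa using CH
  obtain ⟨L, hne, h1, h2, h3, h4⟩ := aw_filter CH0 hsep hinf
  obtain ⟨φ, hφ⟩ := aw_limfun h1 h3
  exact ⟨φ, aw_pure h1 h3 hφ, fun A comm hmax hp => aw_masa_false hsep h1 h2 h4 hφ comm hmax hp⟩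
end
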